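/- arXiv:1304.2677 — 3 statements merged into one kernel-verified Lean document; each statement's English description precedes it below -/
import Mathlib

section
/- N_+(Q_h) = Σ_{m=1}^{M₀} 𝒩_+^{(m)} + Σ_{m=M₀+1}^{M₀+M₁} K_m + M₁ and N_-(Q_h) = Σ_{m=1}^{M₀} 𝒩_-^{(m)} + Σ_{m=M₀+1}^{M₀+M₁} K_m + M₁. (These are the total multiplicities of the strictly positive and strictly negative spectrum of the self-adjoint finite rank Hankel operator H on L²(0,∞) given by (Hf)(t) = ∫₀^∞ h(t+s) f(s) ds.) -/
/-!
The Hankel form factors as `Q_h(f) = uᴴ G u`, where `u` collects the inner products of `f` with the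
exponential monomials `t^j e^{-conj(α_m) t}`, `j ≤ K_m`. These are linearly independent, being
generalized eigenfunctions of `d/dt`, so `f ↦ u` is surjective and `Q_h` has the inertia of the
Hermitian matrix `G`.

The block of `G` pairing `α_m` with `conj α_m` vanishes in degrees `i + j > K_m` and has nonzero
entries for `i + j = K_m`; hence `G` is invertible and its inertia indices add up to its size. The
eigenvalues of `G` need not be computed. For a real exponent the monomials of degree above `K_m / 2`
span an isotropic subspace, to which the middle one can be added with the sign of `p_m` when `K_m`
is even; for a conjugate pair all monomials of one member span an isotropic subspace. This gives a
nonnegative and a nonpositive subspace for `G` of complementary dimensions, and for a nondegenerate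
form these dimensions must be the inertia indices.
-/

open MeasureTheory Complex Polynomial

noncomputable section

/-- Lebesgue measure on the half-line `(0,∞)`. -/
abbrev halfLineMeasure : Measure ℝ := volume.restrict (Set.Ioi (0 : ℝ))

/-- `N₊(Q)`: the supremum of `dim V` over (finite-dimensional) subspaces `V` on which the
quadratic form `Q` is strictly positive away from `0`. -/
def Npos {E : Type*} [AddCommGroup E] [Module ℂ E] (Q : E → ℝ) : ℕ :=
  sSup {d : ℕ | ∃ V : Submodule ℂ E, FiniteDimensional ℂ V ∧
    Module.finrank ℂ V = d ∧ ∀ f ∈ V, f ≠ 0 → 0 < Q f}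

/-- `N₋(Q)`: the supremum of `dim V` over (finite-dimensional) subspaces `V` on which the
quadratic form `Q` is strictly negative away from `0`. -/
def Nneg {E : Type*} [AddCommGroup E] [Module ℂ E] (Q : E → ℝ) : ℕ :=
  sSup {d : ℕ | ∃ V : Submodule ℂ E, FiniteDimensional ℂ V ∧
    Module.finrank ℂ V = d ∧ ∀ f ∈ V, f ≠ 0 → Q f < 0}

/-- The Hankel quadratic form `Q_h(f) = ∫₀^∞∫₀^∞ h(t+s) f(s) conj(f(t)) ds dt`
(real-valued since `h` is real-valued). -/
def hankelForm (h : ℝ → ℂ) (f : Lp ℂ 2 halfLineMeasure) : ℝ :=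
  (∫ t, (∫ s, h (t + s) * (f : ℝ → ℂ) s * starRingEnd ℂ ((f : ℝ → ℂ) t)
      ∂halfLineMeasure) ∂halfLineMeasure).re

/-- The finite-rank Hankel kernel `h(t) = Σ_{m=1}^{M} P_m(t) e^{−α_m t}`. -/
def frKernel (M : ℕ) (α : ℕ → ℂ) (P : ℕ → Polynomial ℂ) (t : ℝ) : ℂ :=
  ∑ m ∈ Finset.Icc 1 M, (P m).eval (t : ℂ) * Complex.exp (-α m * t)

/-- `𝒩₊^{(m)}` of a real term with polynomial degree `K` and leading coefficient `p ≠ 0`. -/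
def calNpos (K : ℕ) (p : ℝ) : ℕ :=
  if Odd K then (K + 1) / 2 else if 0 < p then K / 2 + 1 else K / 2

/-- `𝒩₋^{(m)}` of a real term with polynomial degree `K` and leading coefficient `p ≠ 0`. -/
def calNneg (K : ℕ) (p : ℝ) : ℕ :=
  if Odd K then (K + 1) / 2 else if 0 < p then K / 2 else K / 2 + 1

section Inertia

variable {E F : Type*} [AddCommGroup E] [Module ℂ E] [AddCommGroup F] [Module ℂ F]

theorem Nneg_eq_Npos_neg (q : F → ℝ) : Nneg q = Npos (-q) := by
  simp only [Nneg, Npos, Pi.neg_apply, neg_pos]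

theorem Npos_comp_of_surjective {L : E →ₗ[ℂ] F} (hL : Function.Surjective L) {q : F → ℝ}
    (hq : q 0 = 0) : Npos (q ∘ L) = Npos q := by
  unfold Npos
  congr 1
  ext d
  constructor
  · rintro ⟨V, _, rfl, hV⟩
    have hinj : Function.Injective (L.domRestrict V) := by
      refine (injective_iff_map_eq_zero _).2 fun f hf => ?_
      by_contra hne
      have hpos := hV f f.2 (by simpa using hne)
      rw [Function.comp_apply, show L f = 0 from hf, hq] at hpos
      exact hpos.false
    refine ⟨V.map L, inferInstance, ?_, ?_⟩
    · rw [← LinearMap.range_domRestrict, LinearMap.finrank_range_of_inj hinj]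
    · rintro _ ⟨f, hf, rfl⟩ hne
      exact hV f hf fun h => hne (by rw [h, map_zero])
  · rintro ⟨V, _, rfl, hV⟩
    obtain ⟨g, hg⟩ := L.exists_rightInverse_of_surjective (LinearMap.range_eq_top.2 hL)
    have hLg : Function.LeftInverse L g := LinearMap.congr_fun hg
    refine ⟨V.map g, inferInstance, (V.equivMapOfInjective g hLg.injective).finrank_eq.symm, ?_⟩
    rintro _ ⟨x, hx, rfl⟩ hne
    rw [Function.comp_apply, hLg x]
    exact hV x hx fun h => hne (by rw [h, map_zero])

theorem Nneg_comp_of_surjective {L : E →ₗ[ℂ] F} (hL : Function.Surjective L) {q : F → ℝ}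
    (hq : q 0 = 0) : Nneg (q ∘ L) = Nneg q := by
  rw [Nneg_eq_Npos_neg, Nneg_eq_Npos_neg]
  exact Npos_comp_of_surjective hL (q := -q) (by simp [hq])

variable [FiniteDimensional ℂ F] {q : F → ℝ}

theorem finrank_add_finrank_le_of_pos_of_nonpos {V W : Submodule ℂ F}
    (hV : ∀ x ∈ V, x ≠ 0 → 0 < q x) (hW : ∀ x ∈ W, q x ≤ 0) :
    Module.finrank ℂ V + Module.finrank ℂ W ≤ Module.finrank ℂ F := by
  refine Submodule.finrank_add_finrank_le_of_disjoint (Submodule.disjoint_def.2 fun x hxV hxW => ?_)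
  by_contra hne
  exact (hV x hxV hne).not_ge (hW x hxW)

theorem Npos_eq_finrank {V W : Submodule ℂ F} (hV : ∀ x ∈ V, x ≠ 0 → 0 < q x)
    (hW : ∀ x ∈ W, q x ≤ 0)
    (hVW : Module.finrank ℂ V + Module.finrank ℂ W = Module.finrank ℂ F) :
    Npos q = Module.finrank ℂ V := by
  refine IsGreatest.csSup_eq ⟨⟨V, inferInstance, rfl, hV⟩, ?_⟩
  rintro _ ⟨V', _, rfl, hV'⟩
  have := finrank_add_finrank_le_of_pos_of_nonpos hV' hW
  omega

theorem Npos_and_Nneg_eq_finrank {Vpos Vneg S T : Submodule ℂ F} (hq : q 0 = 0)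
    (hVpos : ∀ x ∈ Vpos, x ≠ 0 → 0 < q x) (hVneg : ∀ x ∈ Vneg, x ≠ 0 → q x < 0)
    (hV : Module.finrank ℂ Vpos + Module.finrank ℂ Vneg = Module.finrank ℂ F)
    (hS : ∀ x ∈ S, 0 ≤ q x) (hT : ∀ x ∈ T, q x ≤ 0)
    (hST : Module.finrank ℂ S + Module.finrank ℂ T = Module.finrank ℂ F) :
    Npos q = Module.finrank ℂ S ∧ Nneg q = Module.finrank ℂ T := by
  have hVpos' : ∀ x ∈ Vpos, (-q) x ≤ 0 := fun x hx => by
    rcases eq_or_ne x 0 with rfl | hne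
    · simp [hq]
    · simpa using (hVpos x hx hne).le
  have hVneg' : ∀ x ∈ Vneg, q x ≤ 0 := fun x hx => by
    rcases eq_or_ne x 0 with rfl | hne
    · exact hq.le
    · exact (hVneg x hx hne).le
  have hneg : ∀ x ∈ Vneg, x ≠ 0 → 0 < (-q) x := fun x hx hne => neg_pos.2 (hVneg x hx hne)
  have h₁ := finrank_add_finrank_le_of_pos_of_nonpos hVpos hT
  have h₂ := finrank_add_finrank_le_of_pos_of_nonpos hneg
    (W := S) fun x hx => neg_nonpos.2 (hS x hx)
  rw [Nneg_eq_Npos_neg, Npos_eq_finrank hVpos hVneg' hV,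
    Npos_eq_finrank hneg hVpos' (by rwa [add_comm])]
  omega

end Inertia

section HermitianForm

open Matrix
open scoped ComplexOrder

variable {ι κ : Type*} [Fintype ι] [Fintype κ]

/-- The real quadratic form `x ↦ re (xᴴ G x)` of a square matrix `G`; for Hermitian `G` the
number `xᴴ G x` is already real. -/
def hermitianForm (G : Matrix ι ι ℂ) (x : ι → ℂ) : ℝ :=
  (star x ⬝ᵥ G *ᵥ x).re

theorem hermitianForm_zero (G : Matrix ι ι ℂ) : hermitianForm G 0 = 0 := by
  simp [hermitianForm]

theorem hermitianForm_neg (G : Matrix ι ι ℂ) (x : ι → ℂ) :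
    hermitianForm (-G) x = -hermitianForm G x := by
  simp [hermitianForm, neg_mulVec]

theorem hermitianForm_mulVec (G : Matrix ι ι ℂ) (B : Matrix ι κ ℂ) (y : κ → ℂ) :
    hermitianForm G (B *ᵥ y) = hermitianForm (Bᴴ * G * B) y := by
  simp only [hermitianForm, star_mulVec, dotProduct_mulVec, vecMul_vecMul, Matrix.mul_assoc]

theorem exists_submodule_hermitianForm_eq [DecidableEq ι] (G : Matrix ι ι ℂ) {M : Matrix ι ι ℂ}
    (hM : Mᴴ * M = 1) (S : Finset ι) :
    ∃ V : Submodule ℂ (ι → ℂ), Module.finrank ℂ V = S.card ∧ ∀ x ∈ V, ∃ y : S → ℂ,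
      (y = 0 → x = 0) ∧ hermitianForm G x = hermitianForm ((Mᴴ * G * M).submatrix (↑) (↑)) y := by
  set B : Matrix ι S ℂ := M.submatrix id (↑) with hB
  have hBG (A : Matrix ι ι ℂ) : Bᴴ * A * B = (Mᴴ * A * M).submatrix (↑) (↑) := by
    simp [hB, Matrix.submatrix_mul _ _ _ id _ Function.bijective_id]
  have hBB : Bᴴ * B = 1 := by
    simpa [hM, Matrix.submatrix_one _ Subtype.val_injective] using hBG 1
  have hinj : Function.Injective B.mulVecLin := fun y z h => by
    simpa [hBB] using congrArg (Bᴴ *ᵥ ·) (show B *ᵥ y = B *ᵥ z from h)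
  refine ⟨LinearMap.range B.mulVecLin, by simp [LinearMap.finrank_range_of_inj hinj], ?_⟩
  rintro _ ⟨y, rfl⟩
  exact ⟨y, fun h => by rw [h, map_zero], by rw [mulVecLin_apply, hermitianForm_mulVec, hBG]⟩

theorem exists_submodule_hermitianForm_pos [DecidableEq ι] {G M : Matrix ι ι ℂ}
    (hM : Mᴴ * M = 1) {S : Finset ι}
    (hS : ((Mᴴ * G * M).submatrix (↑) (↑) : Matrix S S ℂ).PosDef) :
    ∃ V : Submodule ℂ (ι → ℂ), Module.finrank ℂ V = S.card ∧
      ∀ x ∈ V, x ≠ 0 → 0 < hermitianForm G x := by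
  obtain ⟨V, hVS, hV⟩ := exists_submodule_hermitianForm_eq G hM S
  refine ⟨V, hVS, fun x hx hne => ?_⟩
  obtain ⟨y, hyx, hxy⟩ := hV x hx
  exact hxy ▸ hS.re_dotProduct_pos fun hy => hne (hyx hy)

theorem exists_submodule_hermitianForm_nonneg {G : Matrix ι ι ℂ} {S : Finset ι}
    (hS : (G.submatrix (↑) (↑) : Matrix S S ℂ).PosSemidef) :
    ∃ V : Submodule ℂ (ι → ℂ), Module.finrank ℂ V = S.card ∧ ∀ x ∈ V, 0 ≤ hermitianForm G x := by
  classical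
  obtain ⟨V, hVS, hV⟩ := exists_submodule_hermitianForm_eq G (M := 1) (by simp) S
  refine ⟨V, hVS, fun x hx => ?_⟩
  obtain ⟨y, -, hxy⟩ := hV x hx
  rw [hxy, conjTranspose_one, one_mul, mul_one]
  exact hS.re_dotProduct_nonneg y

theorem exists_submodules_hermitianForm_definite [DecidableEq ι] {G : Matrix ι ι ℂ}
    (hG : G.IsHermitian) (hdet : G.det ≠ 0) :
    ∃ Vpos Vneg : Submodule ℂ (ι → ℂ),
      (∀ x ∈ Vpos, x ≠ 0 → 0 < hermitianForm G x) ∧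
      (∀ x ∈ Vneg, x ≠ 0 → hermitianForm G x < 0) ∧
      Module.finrank ℂ Vpos + Module.finrank ℂ Vneg = Fintype.card ι := by
  set U : Matrix ι ι ℂ := ↑hG.eigenvectorUnitary
  have hU : Uᴴ * U = 1 := Unitary.coe_star_mul_self hG.eigenvectorUnitary
  have hdiag : Uᴴ * G * U = diagonal (fun i => (hG.eigenvalues i : ℂ)) := by
    have := hG.conjStarAlgAut_star_eigenvectorUnitary
    rwa [Unitary.conjStarAlgAut_star_apply] at this
  have hne (i : ι) : hG.eigenvalues i ≠ 0 := fun h => hdet <| by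
    rw [hG.det_eq_prod_eigenvalues]
    exact Finset.prod_eq_zero (Finset.mem_univ i) (by simp [h])
  obtain ⟨Vpos, hVpos, hpos⟩ := exists_submodule_hermitianForm_pos hU (G := G)
    (S := {i | 0 < hG.eigenvalues i}) <| by
      rw [hdiag, submatrix_diagonal _ _ Subtype.val_injective]
      exact PosDef.diagonal fun i => by simpa using (Finset.mem_filter.1 i.2).2
  obtain ⟨Vneg, hVneg, hneg⟩ := exists_submodule_hermitianForm_pos hU (G := -G)
    (S := {i | ¬ 0 < hG.eigenvalues i}) <| by
      rw [mul_neg, neg_mul, hdiag, diagonal_neg, submatrix_diagonal _ _ Subtype.val_injective]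
      exact PosDef.diagonal fun i => neg_pos.2 <| by
        exact_mod_cast (not_lt.1 (Finset.mem_filter.1 i.2).2).lt_of_ne (hne i)
  refine ⟨Vpos, Vneg, hpos, fun x hx hx0 => ?_, ?_⟩
  · simpa [hermitianForm_neg] using hneg x hx hx0
  · rw [hVpos, hVneg, Finset.card_filter_add_card_filter_not, Finset.card_univ]

theorem Npos_and_Nneg_hermitianForm [DecidableEq ι] {G : Matrix ι ι ℂ} (hG : G.IsHermitian)
    (hdet : G.det ≠ 0)
    {S T : Finset ι} (hS : (G.submatrix (↑) (↑) : Matrix S S ℂ).PosSemidef)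
    (hT : ((-G).submatrix (↑) (↑) : Matrix T T ℂ).PosSemidef)
    (hST : S.card + T.card = Fintype.card ι) :
    Npos (hermitianForm G) = S.card ∧ Nneg (hermitianForm G) = T.card := by
  obtain ⟨Vpos, Vneg, hpos, hneg, hV⟩ := exists_submodules_hermitianForm_definite hG hdet
  obtain ⟨VS, hVS, hnonneg⟩ := exists_submodule_hermitianForm_nonneg hS
  obtain ⟨VT, hVT, hnonpos⟩ := exists_submodule_hermitianForm_nonneg hT
  rw [← Module.finrank_fintype_fun_eq_card ℂ] at hV hST
  rw [← hVS, ← hVT] at hST ⊢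
  exact Npos_and_Nneg_eq_finrank (hermitianForm_zero G) hpos hneg hV hnonneg
    (fun x hx => by simpa [hermitianForm_neg] using hnonpos x hx) hST

end HermitianForm

section ExponentialPolynomial

/-- The space of entire functions, on which differentiation is an endomorphism. -/
def entireFunctions : Submodule ℂ (ℂ → ℂ) where
  carrier := {f | Differentiable ℂ f}
  add_mem' := Differentiable.add
  zero_mem' := differentiable_const 0
  smul_mem' c _ hf := hf.const_smul c

/-- Differentiation as an endomorphism of the space of entire functions. -/
def entireDeriv : Module.End ℂ entireFunctions where
  toFun f := ⟨deriv f, f.2.deriv⟩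
  map_add' f g := Subtype.ext <| _root_.funext fun z => deriv_add (f.2 z) (g.2 z)
  map_smul' c f := Subtype.ext <| _root_.funext fun z => deriv_const_smul c (f.2 z)

/-- The exponential polynomial `z ↦ R(z) e^{βz}` as an entire function, linear in `R`. -/
def expPolynomial (β : ℂ) : ℂ[X] →ₗ[ℂ] entireFunctions where
  toFun R := ⟨fun z => R.eval z * cexp (β * z), R.differentiable.mul (by fun_prop)⟩
  map_add' R S := Subtype.ext <| _root_.funext fun z => by simp [add_mul]
  map_smul' c R := Subtype.ext <| _root_.funext fun z => by simp [mul_assoc]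

theorem expPolynomial_injective (β : ℂ) : Function.Injective (expPolynomial β) :=
  (injective_iff_map_eq_zero _).2 fun R hR => Polynomial.funext fun z => by
    simpa [expPolynomial, exp_ne_zero] using congrFun (congrArg Subtype.val hR) z

theorem entireDeriv_sub_smul_comp_expPolynomial (β : ℂ) :
    (entireDeriv - β • 1) ∘ₗ expPolynomial β = expPolynomial β ∘ₗ derivative := by
  refine LinearMap.ext fun R => ?_
  have hderiv (z : ℂ) : HasDerivAt (fun z => R.eval z * cexp (β * z))
      (R.derivative.eval z * cexp (β * z) + R.eval z * (cexp (β * z) * (β * 1))) z :=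
    (R.hasDerivAt z).mul ((hasDerivAt_id z).const_mul β).cexp
  refine Subtype.ext <| _root_.funext fun z => ?_
  change deriv (fun z => R.eval z * cexp (β * z)) z - β * (R.eval z * cexp (β * z)) =
    R.derivative.eval z * cexp (β * z)
  rw [(hderiv z).deriv]
  ring

theorem expPolynomial_mem_maxGenEigenspace (β : ℂ) (R : ℂ[X]) :
    expPolynomial β R ∈ entireDeriv.maxGenEigenspace β := by
  refine (Module.End.mem_maxGenEigenspace _ _ _).2 ⟨R.natDegree + 1, ?_⟩
  have hpow := LinearMap.congr_fun (Module.End.commute_pow_left_of_commute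
    (entireDeriv_sub_smul_comp_expPolynomial β) (R.natDegree + 1)) R
  simpa [Module.End.pow_apply, iterate_derivative_eq_zero (Nat.lt_succ_self _)] using hpow

theorem entireFunctions_eq_zero_of_Ioi {f : entireFunctions}
    (hf : ∀ t : ℝ, 0 < t → (f : ℂ → ℂ) t = 0) : f = 0 := by
  have htendsto : Filter.Tendsto Complex.ofReal (nhdsWithin 1 {1}ᶜ) (nhdsWithin (1 : ℝ) {1}ᶜ) :=
    continuous_ofReal.continuousWithinAt.tendsto_nhdsWithin fun t ht => by simpa using ht
  have hzero : ∀ᶠ t : ℝ in nhdsWithin 1 {1}ᶜ, (f : ℂ → ℂ) t = (0 : ℂ → ℂ) t :=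
    ((lt_mem_nhds one_pos).filter_mono nhdsWithin_le_nhds).mono hf
  exact Subtype.ext <| AnalyticOnNhd.eq_of_frequently_eq
    (analyticOnNhd_univ_iff_differentiable.2 f.2) analyticOnNhd_const
    (htendsto.frequently hzero.frequently)

theorem eq_zero_of_sum_eval_mul_cexp_eq_zero {ι : Type*} [Fintype ι] {β : ι → ℂ}
    (hβ : Function.Injective β) {R : ι → ℂ[X]}
    (h : ∀ t : ℝ, 0 < t → ∑ m, (R m).eval (t : ℂ) * cexp (β m * t) = 0) (m : ι) : R m = 0 := by
  have hsum : ∑ m, expPolynomial (β m) (R m) = 0 :=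
    entireFunctions_eq_zero_of_Ioi fun t ht => by simpa [expPolynomial] using h t ht
  have hindep := entireDeriv.independent_maxGenEigenspace.comp hβ
  rw [iSupIndep_iff_finsetSum_eq_zero_imp_eq_zero] at hindep
  refine expPolynomial_injective (β m) ?_
  rw [map_zero]
  exact hindep _ _ (fun m _ => expPolynomial_mem_maxGenEigenspace (β m) (R m)) hsum m
    (Finset.mem_univ m)

end ExponentialPolynomial

section HalfLine

theorem linearIndependent_toLp {κ : Type*} [Finite κ] {g : κ → ℝ → ℂ}
    (hg : ∀ p, MemLp (g p) 2 halfLineMeasure)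
    (hcont : ∀ p, ContinuousOn (g p) (Set.Ioi 0))
    (hindep : LinearIndependent ℂ fun p (t : Set.Ioi (0 : ℝ)) => g p t) :
    LinearIndependent ℂ fun p => (hg p).toLp := by
  have := Fintype.ofFinite κ
  rw [Fintype.linearIndependent_iff] at hindep ⊢
  intro c hc
  have hae : (fun t => ∑ p, c p * g p t) =ᵐ[halfLineMeasure] 0 := by
    have hzero := Lp.coeFn_zero ℂ 2 halfLineMeasure
    rw [← hc] at hzero
    filter_upwards [hzero, Lp.coeFn_fun_finsetSum Finset.univ fun p => c p • (hg p).toLp,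
      ae_all_iff.2 fun p => Lp.coeFn_smul (c p) (hg p).toLp,
      ae_all_iff.2 fun p => (hg p).coeFn_toLp] with t h0 hsum hsmul hcoe
    rw [hsum] at h0
    simpa [hsmul, hcoe] using h0
  have hon : Set.EqOn (fun t => ∑ p, c p * g p t) 0 (Set.Ioi 0) :=
    Measure.eqOn_open_of_ae_eq hae isOpen_Ioi
      (continuousOn_finsetSum _ fun p _ => continuousOn_const.mul (hcont p)) continuousOn_const
  exact hindep c <| _root_.funext fun t => by simpa using hon t.2

open scoped ComplexOrder in
theorem surjective_pi_inner {κ E : Type*} [Finite κ] [NormedAddCommGroup E]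
    [InnerProductSpace ℂ E] {v : κ → E} (hv : LinearIndependent ℂ v) :
    Function.Surjective (LinearMap.pi fun p => innerₛₗ ℂ (v p)) := by
  classical
  have := Fintype.ofFinite κ
  intro y
  have hunit : IsUnit (Matrix.gram ℂ v) := (Matrix.posDef_gram_of_linearIndependent hv).isUnit
  obtain ⟨c, hc⟩ := Matrix.mulVec_surjective_iff_isUnit.2 hunit y
  refine ⟨∑ q, c q • v q, ?_⟩
  ext p
  simp [← hc, Matrix.mulVec, dotProduct, Matrix.gram_apply, mul_comm]

theorem integrable_conj_mul {X : Type*} [MeasurableSpace X] {μ : Measure X} {g : X → ℂ}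
    (hg : MemLp g 2 μ) (f : Lp ℂ 2 μ) : Integrable (fun s => starRingEnd ℂ (g s) * f s) μ :=
  hg.star.integrable_mul (Lp.memLp f)

theorem integral_conj_mul_eq_inner {X : Type*} [MeasurableSpace X] {μ : Measure X} {g : X → ℂ}
    (hg : MemLp g 2 μ) (f : Lp ℂ 2 μ) :
    ∫ s, starRingEnd ℂ (g s) * f s ∂μ = inner ℂ hg.toLp f := by
  rw [L2.inner_def]
  refine integral_congr_ae ?_
  filter_upwards [hg.coeFn_toLp] with s hs
  rw [hs, RCLike.inner_apply, mul_comm]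

theorem integral_sum_sum_const_mul {X κ : Type*} [MeasurableSpace X] {μ : Measure X} [Fintype κ]
    (c : κ → κ → ℂ) {φ : κ → κ → X → ℂ} (hφ : ∀ p q, Integrable (φ p q) μ) :
    ∫ x, ∑ p, ∑ q, c p q * φ p q x ∂μ = ∑ p, ∑ q, c p q * ∫ x, φ p q x ∂μ := by
  have hint (p q : κ) : Integrable (fun x => c p q * φ p q x) μ := (hφ p q).const_mul (c p q)
  rw [integral_finsetSum _ fun p _ => integrable_finsetSum _ fun q _ => hint p q]
  refine Finset.sum_congr rfl fun p _ => ?_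
  simp_rw [integral_finsetSum _ fun q _ => hint p q, integral_const_mul]

theorem hankelForm_eq_hermitianForm {κ : Type*} [Fintype κ] {h : ℝ → ℂ} {G : Matrix κ κ ℂ}
    {g : κ → ℝ → ℂ} (hg : ∀ p, MemLp (g p) 2 halfLineMeasure)
    (hh : ∀ t s, h (t + s) = ∑ p, ∑ q, G p q * g p t * starRingEnd ℂ (g q s)) :
    hankelForm h = hermitianForm G ∘ LinearMap.pi fun p => innerₛₗ ℂ (hg p).toLp := by
  ext f
  have hprod (t s : ℝ) : h (t + s) * f s * starRingEnd ℂ (f t) = ∑ p, ∑ q,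
      G p q * starRingEnd ℂ (starRingEnd ℂ (g p t) * f t) * (starRingEnd ℂ (g q s) * f s) := by
    simp only [hh, Finset.sum_mul, map_mul, conj_conj]
    exact Finset.sum_congr rfl fun p _ => Finset.sum_congr rfl fun q _ => by ring
  have hint (p : κ) : Integrable (fun s => starRingEnd ℂ (g p s) * f s) halfLineMeasure :=
    integrable_conj_mul (hg p) f
  have hint_conj (p : κ) : Integrable
      (fun t => starRingEnd ℂ (starRingEnd ℂ (g p t) * f t)) halfLineMeasure :=
    (conjCLE : ℂ →L[ℝ] ℂ).integrable_comp (hint p)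
  have hinner (t : ℝ) : ∫ s, h (t + s) * f s * starRingEnd ℂ (f t) ∂halfLineMeasure = ∑ p, ∑ q,
      G p q * inner ℂ (hg q).toLp f * starRingEnd ℂ (starRingEnd ℂ (g p t) * f t) := by
    simp_rw [hprod]
    rw [integral_sum_sum_const_mul (fun p q => G p q * _) fun _ q => hint q]
    simp only [integral_conj_mul_eq_inner (hg _), mul_right_comm]
  simp_rw [hankelForm, hinner]
  rw [integral_sum_sum_const_mul (fun p q => G p q * _) fun p _ => hint_conj p]
  simp only [integral_conj, integral_conj_mul_eq_inner (hg _), ← Finset.sum_mul]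
  simp only [hermitianForm, Matrix.mulVec, dotProduct, Function.comp_apply, LinearMap.pi_apply,
    innerₛₗ_apply_apply, Pi.star_apply, RCLike.star_def, mul_comm]

/-- The exponential monomial `t ↦ t^j e^{-at}`. -/
def expMonomial (a : ℂ) (j : ℕ) (t : ℝ) : ℂ :=
  (t : ℂ) ^ j * cexp (-a * t)

theorem continuous_expMonomial (a : ℂ) (j : ℕ) : Continuous (expMonomial a j) := by
  unfold expMonomial
  fun_prop

theorem conj_expMonomial (a : ℂ) (j : ℕ) (t : ℝ) :
    starRingEnd ℂ (expMonomial a j t) = expMonomial (starRingEnd ℂ a) j t := by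
  simp [expMonomial, ← exp_conj]

theorem norm_expMonomial {a : ℂ} {j : ℕ} {t : ℝ} (ht : 0 < t) :
    ‖expMonomial a j t‖ = t ^ j * Real.exp (-a.re * t) := by
  simp [expMonomial, norm_exp, abs_of_pos ht]

theorem memLp_expMonomial {a : ℂ} (ha : 0 < a.re) (j : ℕ) :
    MemLp (expMonomial a j) 2 halfLineMeasure := by
  rw [memLp_two_iff_integrable_sq_norm (continuous_expMonomial a j).aestronglyMeasurable]
  have hint := integrableOn_rpow_mul_exp_neg_mul_rpow (p := 1) (s := (2 * j : ℕ)) (b := 2 * a.re)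
    (neg_one_lt_zero.trans_le (Nat.cast_nonneg _)) one_pos (by positivity)
  refine hint.congr_fun (fun t ht => ?_) measurableSet_Ioi
  simp only [norm_expMonomial ht, Real.rpow_one, Real.rpow_natCast, mul_pow, ← pow_mul,
    ← Real.exp_nat_mul, mul_comm j 2]
  push_cast
  ring_nf

/-- The index set of the exponential monomials `t^j e^{-α_m t}` with `j ≤ K_m`. -/
abbrev MonomialIndex {ι : Type*} (K : ι → ℕ) : Type _ :=
  Σ m, Fin (K m + 1)

theorem linearIndependent_expMonomial {ι : Type*} [Finite ι] {a : ι → ℂ}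
    (ha : Function.Injective a) (K : ι → ℕ) :
    LinearIndependent ℂ fun (p : MonomialIndex K) (t : Set.Ioi (0 : ℝ)) =>
      expMonomial (a p.1) p.2 t := by
  have := Fintype.ofFinite ι
  refine Fintype.linearIndependent_iff.2 fun c hc p => ?_
  let R (m : ι) : ℂ[X] := ∑ j : Fin (K m + 1), monomial j (c ⟨m, j⟩)
  have hR : R p.1 = 0 := by
    refine eq_zero_of_sum_eval_mul_cexp_eq_zero (neg_injective.comp ha) (fun t ht => ?_) p.1
    simpa [R, Fintype.sum_sigma, eval_finsetSum, Finset.sum_mul, expMonomial, mul_assoc]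
      using congrFun hc ⟨t, ht⟩
  simpa [R, finsetSum_coeff, coeff_monomial, Fin.val_inj] using congrArg (coeff · p.2) hR

end HalfLine

section HankelMatrix

open Matrix

theorem eval_add_eq_sum_sum {R : Type*} [CommSemiring R] {P : R[X]} {K L : ℕ}
    (hK : P.natDegree ≤ K) (hL : P.natDegree ≤ L) (t s : R) :
    P.eval (t + s) = ∑ i : Fin (K + 1), ∑ j : Fin (L + 1),
      ((i + j : ℕ).choose j * P.coeff (i + j)) * t ^ (i : ℕ) * s ^ (j : ℕ) := by
  rw [add_comm, ← taylor_eval, eval_eq_sum_range' (n := L + 1) (by rw [natDegree_taylor]; omega),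
    Finset.sum_comm, Finset.sum_range]
  refine Finset.sum_congr rfl fun j _ => ?_
  have hhasse : (hasseDeriv j P).natDegree < K + 1 := by
    have := natDegree_hasseDeriv_le P j
    omega
  simp only [taylor_coeff, eval_eq_sum_range' hhasse, Finset.sum_mul, hasseDeriv_coeff,
    Finset.sum_range]

variable {ι : Type*}

/-- The kernel `h(t) = Σ_m P_m(t) e^{-α_m t}` with terms indexed by an arbitrary finite type. -/
def expKernel [Fintype ι] (α : ι → ℂ) (P : ι → ℂ[X]) (t : ℝ) : ℂ :=
  ∑ m, (P m).eval (t : ℂ) * cexp (-α m * t)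

/-- The family of terms `P_m(t) e^{-α_m t}` is stable under complex conjugation; for pairwise
distinct exponents this says that its sum is real-valued. -/
def IsConjInvariant (α : ι → ℂ) (P : ι → ℂ[X]) : Prop :=
  ∀ n, ∃ m, α m = starRingEnd ℂ (α n) ∧ P m = (P n).map (starRingEnd ℂ)

/-- The matrix of the Hankel form of `expKernel α P` with respect to the exponential monomials:
the rows of the block of `α_m` meet only the columns of the block of `conj α_m`. -/
def hankelMatrix (α : ι → ℂ) (P : ι → ℂ[X]) (K : ι → ℕ) :
    Matrix (MonomialIndex K) (MonomialIndex K) ℂ :=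
  .of fun p q => if α q.1 = starRingEnd ℂ (α p.1) then
    ((p.2 + q.2 : ℕ).choose q.2 : ℂ) * (P q.1).coeff (p.2 + q.2) else 0

variable {α : ι → ℂ} {P : ι → ℂ[X]} {K : ι → ℕ}

theorem IsConjInvariant.eq_map (hP : IsConjInvariant α P) (hα : Function.Injective α) {m n : ι}
    (hmn : α m = starRingEnd ℂ (α n)) : P m = (P n).map (starRingEnd ℂ) := by
  obtain ⟨l, hl, hPl⟩ := hP n
  rwa [hα (hmn.trans hl.symm)]

theorem IsConjInvariant.degree_eq (hP : IsConjInvariant α P) (hα : Function.Injective α)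
    (hK : ∀ m, (P m).degree = K m) {m n : ι} (hmn : α m = starRingEnd ℂ (α n)) : K m = K n := by
  have hdeg := (P n).degree_map (starRingEnd ℂ)
  rw [← hP.eq_map hα hmn, hK, hK] at hdeg
  exact_mod_cast hdeg

theorem IsConjInvariant.exists_perm [Finite ι] (hP : IsConjInvariant α P)
    (hα : Function.Injective α) : ∃ σ : Equiv.Perm ι, ∀ m, α (σ m) = starRingEnd ℂ (α m) := by
  choose σ hσ _ using hP
  have hinj : Function.Injective σ := fun m n hmn =>
    hα <| (starRingEnd ℂ).injective <| by rw [← hσ, ← hσ, hmn]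
  exact ⟨.ofBijective σ (Finite.injective_iff_bijective.1 hinj), hσ⟩

theorem IsConjInvariant.leadingCoeff_im (hP : IsConjInvariant α P) (hα : Function.Injective α)
    {m : ι} (hm : (α m).im = 0) : (P m).leadingCoeff.im = 0 := by
  refine conj_eq_iff_im.1 ?_
  rw [← leadingCoeff_map, ← hP.eq_map hα (conj_eq_iff_im.2 hm).symm]

theorem IsConjInvariant.leadingCoeff_re_ne_zero (hP : IsConjInvariant α P)
    (hα : Function.Injective α) (hK : ∀ m, (P m).degree = K m) {m : ι} (hm : (α m).im = 0) :
    (P m).leadingCoeff.re ≠ 0 := fun hre => by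
  have hlead : (P m).leadingCoeff = 0 := Complex.ext hre (hP.leadingCoeff_im hα hm)
  have hdeg := hK m
  rw [leadingCoeff_eq_zero.1 hlead, degree_zero] at hdeg
  exact WithBot.bot_ne_coe hdeg

theorem IsConjInvariant.neg (hP : IsConjInvariant α P) : IsConjInvariant α (-P) := fun n => by
  obtain ⟨m, hm, hPm⟩ := hP n
  exact ⟨m, hm, by simp [hPm]⟩

theorem hankelMatrix_neg : hankelMatrix α (-P) K = -hankelMatrix α P K := by
  ext p q
  by_cases hpq : α q.1 = starRingEnd ℂ (α p.1) <;> simp [hankelMatrix, hpq]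

theorem isHermitian_hankelMatrix (hP : IsConjInvariant α P) (hα : Function.Injective α) :
    (hankelMatrix α P K).IsHermitian := by
  refine Matrix.IsHermitian.ext fun p q => ?_
  simp only [hankelMatrix, Matrix.of_apply]
  by_cases hpq : α q.1 = starRingEnd ℂ (α p.1)
  · simp [hpq, hP.eq_map hα hpq, Nat.choose_symm_add (a := (p.2 : ℕ)), add_comm (q.2 : ℕ)]
  · have hqp : α p.1 ≠ starRingEnd ℂ (α q.1) := fun h => hpq (by rw [h, conj_conj])
    simp [hpq, hqp]

variable [Fintype ι]

theorem hankelMatrix_mulVec (hα : Function.Injective α) (v : MonomialIndex K → ℂ) {m n : ι}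
    (hmn : α n = starRingEnd ℂ (α m)) (i : Fin (K m + 1)) :
    (hankelMatrix α P K *ᵥ v) ⟨m, i⟩ =
      ∑ j : Fin (K n + 1), ((i + j : ℕ).choose j * (P n).coeff (i + j)) * v ⟨n, j⟩ := by
  have hne (l : ι) (hl : l ≠ n) : α l ≠ starRingEnd ℂ (α m) := fun h => hl (hα (h.trans hmn.symm))
  rw [Matrix.mulVec, dotProduct, Fintype.sum_sigma, Fintype.sum_eq_single n]
  · simp [hankelMatrix, hmn]
  · intro l hl
    simp [hankelMatrix, hne l hl]

theorem det_hankelMatrix_ne_zero [DecidableEq ι] (hP : IsConjInvariant α P)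
    (hα : Function.Injective α) (hK : ∀ m, (P m).degree = K m) :
    (hankelMatrix α P K).det ≠ 0 := by
  intro hdet
  obtain ⟨v, hv, hGv⟩ := Matrix.exists_mulVec_eq_zero_iff.2 hdet
  suffices hzero : ∀ n (j : ℕ) (hj : j < K n + 1), v ⟨n, ⟨j, hj⟩⟩ = 0 from
    hv <| _root_.funext fun p => hzero p.1 p.2 p.2.2
  intro n j
  obtain ⟨m, hm, -⟩ := hP n
  have hmn : α n = starRingEnd ℂ (α m) := by rw [hm, conj_conj]
  have hlead : (P n).coeff (K n) ≠ 0 := coeff_ne_zero_of_eq_degree (hK n)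
  -- The row of degree `K n - j` isolates the unknown of degree `j`: the lower ones vanish by
  -- induction, the higher ones are multiplied by coefficients beyond the degree of `P n`.
  induction j using Nat.strong_induction_on with
  | _ j ih =>
    intro hj
    have hrow := hankelMatrix_mulVec (P := P) hα v hmn
      ⟨K n - j, by rw [hP.degree_eq hα hK hm]; omega⟩
    rw [hGv, Fintype.sum_eq_single ⟨j, hj⟩] at hrow
    · have hsum : K n - j + j = K n := by omega
      simpa [hsum, hlead, (Nat.choose_pos (Nat.lt_succ_iff.1 hj)).ne'] using hrow.symm
    · rintro ⟨l, hl⟩ hlj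
      rcases lt_or_gt_of_ne (Fin.val_ne_iff.2 hlj) with hlt | hgt
      · rw [ih l hlt hl, mul_zero]
      · rw [coeff_eq_zero_of_degree_lt, mul_zero, zero_mul]
        rw [hK n]
        exact_mod_cast show K n < K n - j + l by simp only at hgt; omega

theorem expKernel_add (hP : IsConjInvariant α P) (hα : Function.Injective α)
    (hK : ∀ m, (P m).degree = K m) (t s : ℝ) :
    expKernel α P (t + s) = ∑ p, ∑ q, hankelMatrix α P K p q *
      expMonomial (starRingEnd ℂ (α p.1)) p.2 t *
        starRingEnd ℂ (expMonomial (starRingEnd ℂ (α q.1)) q.2 s) := by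
  obtain ⟨σ, hσ⟩ := hP.exists_perm hα
  rw [expKernel, ← Equiv.sum_comp σ, Fintype.sum_sigma]
  refine Finset.sum_congr rfl fun m _ => ?_
  have hdeg := natDegree_eq_of_degree_eq_some (hK (σ m))
  rw [ofReal_add, eval_add_eq_sum_sum (hdeg.trans (hP.degree_eq hα hK (hσ m))).le hdeg.le,
    Finset.sum_mul]
  refine Finset.sum_congr rfl fun i _ => ?_
  have hrow : ∑ q, hankelMatrix α P K ⟨m, i⟩ q * expMonomial (starRingEnd ℂ (α m)) i t *
      starRingEnd ℂ (expMonomial (starRingEnd ℂ (α q.1)) q.2 s) =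
      expMonomial (α (σ m)) i t *
        (hankelMatrix α P K *ᵥ fun q => expMonomial (α q.1) q.2 s) ⟨m, i⟩ := by
    simp only [mulVec, dotProduct, Finset.mul_sum, conj_expMonomial, conj_conj, hσ, mul_assoc,
      mul_left_comm]
  rw [hrow, hankelMatrix_mulVec hα _ (hσ m), Finset.sum_mul, Finset.mul_sum]
  refine Finset.sum_congr rfl fun j _ => ?_
  rw [expMonomial, expMonomial, mul_add, Complex.exp_add]
  ring

end HankelMatrix

section BlockCount

theorem calNneg_eq_calNpos_neg {K : ℕ} {p : ℝ} (hp : p ≠ 0) : calNneg K p = calNpos K (-p) := by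
  rcases hp.lt_or_gt with h | h <;> simp [calNneg, calNpos, h, not_lt.2 h.le]

theorem calNpos_add_calNpos_neg {K : ℕ} {p : ℝ} (hp : p ≠ 0) :
    calNpos K p + calNpos K (-p) = K + 1 := by
  rcases hp.lt_or_gt with h | h <;> rcases Nat.even_or_odd K with hK | hK <;>
    simp [calNpos, h, not_lt.2 h.le, hK, Nat.not_odd_iff_even.2] <;> grind

theorem lt_add_or_eq_of_calNpos {K i j : ℕ} {p : ℝ} (hi : K + 1 ≤ i + calNpos K p)
    (hj : K + 1 ≤ j + calNpos K p) : K < i + j ∨ i = j ∧ i + j = K ∧ 0 < p := by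
  unfold calNpos at hi hj
  grind

/-- The number of top-degree monomials of the block of `e^{-at}` spanning, together with those of
the other blocks, a subspace on which the Hankel form is nonnegative. A conjugate pair of blocks
contributes all monomials of its member in the upper half-plane. -/
def posBlockDim (a : ℂ) (K : ℕ) (p : ℝ) : ℕ :=
  if 0 < a.im then K + 1 else if a.im = 0 then calNpos K p else 0

theorem posBlockDim_le (a : ℂ) (K : ℕ) (p : ℝ) : posBlockDim a K p ≤ K + 1 := by
  unfold posBlockDim calNpos
  grind

theorem posBlockDim_add_conj {a : ℂ} (K : ℕ) {p q : ℝ} (hpq : a.im = 0 → p ≠ 0 ∧ q = -p) :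
    posBlockDim a K p + posBlockDim (starRingEnd ℂ a) K q = K + 1 := by
  rcases lt_trichotomy a.im 0 with h | h | h
  · simp [posBlockDim, h, h.ne, not_lt.2 h.le]
  · obtain ⟨hp, rfl⟩ := hpq h
    simp [posBlockDim, h, calNpos_add_calNpos_neg hp]
  · simp [posBlockDim, h, h.ne', not_lt.2 h.le]

variable {ι : Type*} [Fintype ι]

/-- The monomials of the `c m` highest degrees `j ≤ K m` in each block `m`. -/
def topMonomials (K c : ι → ℕ) : Finset (MonomialIndex K) :=
  {p | K p.1 + 1 ≤ p.2 + c p.1}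

theorem card_topMonomials {K c : ι → ℕ} (hc : ∀ m, c m ≤ K m + 1) :
    (topMonomials K c).card = ∑ m, c m := by
  rw [topMonomials, Finset.card_filter, Fintype.sum_sigma]
  refine Finset.sum_congr rfl fun m _ => ?_
  have hrev (j : Fin (K m + 1)) : K m + 1 ≤ (Fin.revPerm j : ℕ) + c m ↔ (j : ℕ) < c m := by
    rw [Fin.revPerm_apply, Fin.val_rev]
    omega
  rw [← Equiv.sum_comp Fin.revPerm]
  simp only [hrev, ← Finset.card_filter, Fin.card_filter_val_lt, min_eq_right (hc m)]

theorem mem_topMonomials {K c : ι → ℕ} {p : MonomialIndex K} :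
    p ∈ topMonomials K c ↔ K p.1 + 1 ≤ p.2 + c p.1 := by
  simp [topMonomials]

variable {α : ι → ℂ} {P : ι → ℂ[X]} {K : ι → ℕ}

open Matrix
open scoped ComplexOrder

theorem im_nonneg_of_lt_add_posBlockDim {a : ℂ} {K j : ℕ} {p : ℝ} (hj : j < K + 1)
    (h : K + 1 ≤ j + posBlockDim a K p) : 0 ≤ a.im := by
  by_contra! him
  simp only [posBlockDim, not_lt.2 him.le, him.ne, if_false] at h
  omega

theorem eq_and_im_eq_zero_of_mem_topMonomials (hα : Function.Injective α) {r : ι → ℝ}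
    {p q : MonomialIndex K} (hp : p ∈ topMonomials K fun m => posBlockDim (α m) (K m) (r m))
    (hq : q ∈ topMonomials K fun m => posBlockDim (α m) (K m) (r m))
    (hpq : α q.1 = starRingEnd ℂ (α p.1)) : q.1 = p.1 ∧ (α p.1).im = 0 := by
  rw [mem_topMonomials] at hp hq
  have hpim := im_nonneg_of_lt_add_posBlockDim p.2.2 hp
  have hqim := im_nonneg_of_lt_add_posBlockDim q.2.2 hq
  rw [hpq, conj_im, neg_nonneg] at hqim
  have him : (α p.1).im = 0 := le_antisymm hqim hpim
  exact ⟨hα (hpq.trans (conj_eq_iff_im.2 him)), him⟩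

theorem hankelMatrix_eq_zero_or_of_mem_topMonomials (hP : IsConjInvariant α P)
    (hα : Function.Injective α) (hK : ∀ m, (P m).degree = K m) {p q : MonomialIndex K}
    (hp : p ∈ topMonomials K fun m => posBlockDim (α m) (K m) (P m).leadingCoeff.re)
    (hq : q ∈ topMonomials K fun m => posBlockDim (α m) (K m) (P m).leadingCoeff.re) :
    hankelMatrix α P K p q = 0 ∨ p = q ∧ 0 ≤ hankelMatrix α P K p q := by
  by_cases hpq : α q.1 = starRingEnd ℂ (α p.1)
  swap
  · exact .inl (if_neg hpq)
  obtain ⟨hm, him⟩ := eq_and_im_eq_zero_of_mem_topMonomials hα hp hq hpq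
  obtain ⟨m, i⟩ := p
  obtain ⟨n, j⟩ := q
  obtain rfl : n = m := hm
  simp only [mem_topMonomials, posBlockDim, him, lt_irrefl, if_false, if_true] at hp hq
  rw [hankelMatrix, of_apply, if_pos hpq]
  rcases lt_add_or_eq_of_calNpos hp hq with hlt | ⟨hij, hsum, hpos⟩
  · left
    rw [coeff_eq_zero_of_degree_lt, mul_zero]
    rw [hK]
    exact_mod_cast hlt
  · right
    have hlead : 0 ≤ (P n).coeff (i + j) := by
      rw [hsum, ← natDegree_eq_of_degree_eq_some (hK n), coeff_natDegree]
      exact Complex.nonneg_iff.2 ⟨hpos.le, (hP.leadingCoeff_im hα him).symm⟩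
    exact ⟨by rw [Fin.ext hij], mul_nonneg (Nat.cast_nonneg _) hlead⟩

theorem posSemidef_hankelMatrix_submatrix (hP : IsConjInvariant α P) (hα : Function.Injective α)
    (hK : ∀ m, (P m).degree = K m) {S : Finset (MonomialIndex K)}
    (hS : S = topMonomials K fun m => posBlockDim (α m) (K m) (P m).leadingCoeff.re) :
    ((hankelMatrix α P K).submatrix (↑) (↑) : Matrix S S ℂ).PosSemidef := by
  classical
  subst hS
  set G := (hankelMatrix α P K).submatrix _ _ with hG
  have hentry (p q) : G p q = 0 ∨ p = q ∧ 0 ≤ G p q := by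
    rw [Subtype.ext_iff, hG]
    exact hankelMatrix_eq_zero_or_of_mem_topMonomials hP hα hK p.2 q.2
  have hdiag : diagonal (fun p => G p p) = G := by
    ext p q
    obtain rfl | hpq := eq_or_ne p q
    · rw [diagonal_apply_eq]
    · rw [diagonal_apply_ne _ hpq, (hentry p q).resolve_right fun h => hpq h.1]
  rw [← hdiag]
  exact .diagonal fun p => (hentry p p).elim (·.ge) (·.2)

theorem sum_posBlockDim_add_sum_posBlockDim_neg (hP : IsConjInvariant α P)
    (hα : Function.Injective α) (hK : ∀ m, (P m).degree = K m) :
    ∑ m, posBlockDim (α m) (K m) (P m).leadingCoeff.re +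
      ∑ m, posBlockDim (α m) (K m) (-(P m).leadingCoeff.re) = ∑ m, (K m + 1) := by
  obtain ⟨σ, hσ⟩ := hP.exists_perm hα
  rw [← Equiv.sum_comp σ fun m => posBlockDim (α m) (K m) (-(P m).leadingCoeff.re),
    ← Finset.sum_add_distrib]
  refine Finset.sum_congr rfl fun m _ => ?_
  rw [hP.degree_eq hα hK (hσ m), hσ]
  refine posBlockDim_add_conj (K m) fun him => ⟨hP.leadingCoeff_re_ne_zero hα hK him, ?_⟩
  rw [hα ((hσ m).trans (conj_eq_iff_im.2 him))]

theorem Npos_and_Nneg_hankelForm_expKernel (hP : IsConjInvariant α P)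
    (hα : Function.Injective α) (hre : ∀ m, 0 < (α m).re) (hK : ∀ m, (P m).degree = K m) :
    Npos (hankelForm (expKernel α P)) = ∑ m, posBlockDim (α m) (K m) (P m).leadingCoeff.re ∧
    Nneg (hankelForm (expKernel α P)) =
      ∑ m, posBlockDim (α m) (K m) (-(P m).leadingCoeff.re) := by
  classical
  have hconj : Function.Injective fun m => starRingEnd ℂ (α m) := (starRingEnd ℂ).injective.comp hα
  have hg (p : MonomialIndex K) : MemLp (expMonomial (starRingEnd ℂ (α p.1)) p.2) 2
      halfLineMeasure := memLp_expMonomial (by simpa using hre p.1) p.2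
  have hsurj := surjective_pi_inner (linearIndependent_toLp hg
    (fun p => (continuous_expMonomial _ _).continuousOn) (linearIndependent_expMonomial hconj K))
  have hzero := hermitianForm_zero (hankelMatrix α P K)
  rw [hankelForm_eq_hermitianForm hg (expKernel_add hP hα hK), Npos_comp_of_surjective hsurj hzero,
    Nneg_comp_of_surjective hsurj hzero, ← card_topMonomials fun m => posBlockDim_le _ (K m) _,
    ← card_topMonomials fun m => posBlockDim_le _ (K m) _]
  refine Npos_and_Nneg_hermitianForm (isHermitian_hankelMatrix hP hα)
    (det_hankelMatrix_ne_zero hP hα hK) (posSemidef_hankelMatrix_submatrix hP hα hK rfl) ?_ ?_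
  · rw [← hankelMatrix_neg]
    exact posSemidef_hankelMatrix_submatrix hP.neg hα (by simpa using hK) (by simp)
  · simpa [card_topMonomials fun m => posBlockDim_le _ (K m) _] using
      sum_posBlockDim_add_sum_posBlockDim_neg hP hα hK

end BlockCount

section Indexing

theorem sum_posBlockDim_Icc {M₀ M₁ : ℕ} {α : ℕ → ℂ} (K : ℕ → ℕ) (r : ℕ → ℝ)
    (hαreal : ∀ m ∈ Finset.Icc 1 M₀, (α m).im = 0)
    (hαim : ∀ m ∈ Finset.Icc (M₀ + 1) (M₀ + M₁), 0 < (α m).im)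
    (hαconj : ∀ m ∈ Finset.Icc (M₀ + 1) (M₀ + M₁), α (M₁ + m) = starRingEnd ℂ (α m)) :
    ∑ m ∈ Finset.Icc 1 (M₀ + 2 * M₁), posBlockDim (α m) (K m) (r m) =
      ∑ m ∈ Finset.Icc 1 M₀, calNpos (K m) (r m) +
        ∑ m ∈ Finset.Icc (M₀ + 1) (M₀ + M₁), K m + M₁ := by
  have hreal : ∑ m ∈ Finset.Icc 1 M₀, posBlockDim (α m) (K m) (r m) =
      ∑ m ∈ Finset.Icc 1 M₀, calNpos (K m) (r m) :=
    Finset.sum_congr rfl fun m hm => by simp [posBlockDim, hαreal m hm]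
  have hupper : ∑ m ∈ Finset.Icc (M₀ + 1) (M₀ + M₁), posBlockDim (α m) (K m) (r m) =
      ∑ m ∈ Finset.Icc (M₀ + 1) (M₀ + M₁), K m + M₁ := by
    have hblock : ∀ m ∈ Finset.Icc (M₀ + 1) (M₀ + M₁), posBlockDim (α m) (K m) (r m) = K m + 1 :=
      fun m hm => if_pos (hαim m hm)
    simp [Finset.sum_congr rfl hblock, Finset.sum_add_distrib]
  have hlower : ∑ m ∈ Finset.Icc (M₀ + M₁ + 1) (M₀ + 2 * M₁),
      posBlockDim (α m) (K m) (r m) = 0 := by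
    refine Finset.sum_eq_zero fun m hm => ?_
    obtain ⟨n, rfl⟩ : ∃ n, m = M₁ + n := ⟨m - M₁, by grind⟩
    have hn : n ∈ Finset.Icc (M₀ + 1) (M₀ + M₁) := by grind
    simp [posBlockDim, hαconj n hn, (hαim n hn).ne', (hαim n hn).le]
  simp only [← Finset.Ico_add_one_right_eq_Icc] at *
  rw [← Finset.sum_Ico_consecutive _ (show 1 ≤ M₀ + 1 by omega)
      (show M₀ + 1 ≤ M₀ + 2 * M₁ + 1 by omega),
    ← Finset.sum_Ico_consecutive _ (show M₀ + 1 ≤ M₀ + M₁ + 1 by omega)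
      (show M₀ + M₁ + 1 ≤ M₀ + 2 * M₁ + 1 by omega), hreal, hupper, hlower]
  ring

theorem isConjInvariant_Icc {M₀ M₁ : ℕ} {α : ℕ → ℂ} {P : ℕ → ℂ[X]}
    (hαreal : ∀ m ∈ Finset.Icc 1 M₀, (α m).im = 0)
    (hαconj : ∀ m ∈ Finset.Icc (M₀ + 1) (M₀ + M₁), α (M₁ + m) = starRingEnd ℂ (α m))
    (hPreal : ∀ m ∈ Finset.Icc 1 M₀, ∀ k, starRingEnd ℂ ((P m).coeff k) = (P m).coeff k)
    (hPconj : ∀ m ∈ Finset.Icc (M₀ + 1) (M₀ + M₁), ∀ k,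
      (P (M₁ + m)).coeff k = starRingEnd ℂ ((P m).coeff k)) :
    IsConjInvariant (fun m : Finset.Icc 1 (M₀ + 2 * M₁) => α m) (fun m => P m) := by
  rintro ⟨n, hn⟩
  rw [Finset.mem_Icc] at hn
  obtain hreal | hupper | ⟨m, rfl, hlower⟩ : n ∈ Finset.Icc 1 M₀ ∨
      n ∈ Finset.Icc (M₀ + 1) (M₀ + M₁) ∨
      ∃ m, n = M₁ + m ∧ m ∈ Finset.Icc (M₀ + 1) (M₀ + M₁) := by
    rcases le_or_gt n (M₀ + M₁) with h | h
    · grind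
    · exact .inr (.inr ⟨n - M₁, by grind⟩)
  · refine ⟨⟨n, by grind⟩, (conj_eq_iff_im.2 (hαreal n hreal)).symm, ?_⟩
    ext k
    rw [coeff_map, hPreal n hreal]
  · refine ⟨⟨M₁ + n, by grind⟩, hαconj n hupper, ?_⟩
    ext k
    rw [coeff_map, hPconj n hupper]
  · refine ⟨⟨m, by grind⟩, ?_, ?_⟩
    · simp only [hαconj m hlower, conj_conj]
    · ext k
      rw [coeff_map, hPconj m hlower, conj_conj]

end Indexing

/-- **Total multiplicities of the positive and negative spectra of a finite rank Hankel
operator** (Theorem 1.1 of Yafaev, "On finite rank Hankel operators"):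
`N_±(Q_h) = Σ_{m=1}^{M₀} 𝒩_±^{(m)} + Σ_{m=M₀+1}^{M₀+M₁} K_m + M₁`. -/
theorem finite_rank_hankel_inertia (M₀ M₁ : ℕ) (hM : 1 ≤ M₀ + 2 * M₁)
    (α : ℕ → ℂ) (P : ℕ → Polynomial ℂ) (K : ℕ → ℕ)
    (hdist : ∀ m ∈ Finset.Icc 1 (M₀ + 2 * M₁), ∀ n ∈ Finset.Icc 1 (M₀ + 2 * M₁),
      m ≠ n → α m ≠ α n)
    (hre : ∀ m ∈ Finset.Icc 1 (M₀ + 2 * M₁), 0 < (α m).re)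
    (hαreal : ∀ m ∈ Finset.Icc 1 M₀, (α m).im = 0)
    (hαim : ∀ m ∈ Finset.Icc (M₀ + 1) (M₀ + M₁), 0 < (α m).im)
    (hαconj : ∀ m ∈ Finset.Icc (M₀ + 1) (M₀ + M₁), α (M₁ + m) = starRingEnd ℂ (α m))
    (hdeg : ∀ m ∈ Finset.Icc 1 (M₀ + 2 * M₁), (P m).degree = (K m : WithBot ℕ))
    (hPreal : ∀ m ∈ Finset.Icc 1 M₀, ∀ k : ℕ,
      starRingEnd ℂ ((P m).coeff k) = (P m).coeff k)
    (hPconj : ∀ m ∈ Finset.Icc (M₀ + 1) (M₀ + M₁), ∀ k : ℕ,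
      (P (M₁ + m)).coeff k = starRingEnd ℂ ((P m).coeff k)) :
    Npos (hankelForm (frKernel (M₀ + 2 * M₁) α P)) =
      (∑ m ∈ Finset.Icc 1 M₀, calNpos (K m) ((P m).leadingCoeff.re)) +
        (∑ m ∈ Finset.Icc (M₀ + 1) (M₀ + M₁), K m) + M₁ ∧
    Nneg (hankelForm (frKernel (M₀ + 2 * M₁) α P)) =
      (∑ m ∈ Finset.Icc 1 M₀, calNneg (K m) ((P m).leadingCoeff.re)) +
        (∑ m ∈ Finset.Icc (M₀ + 1) (M₀ + M₁), K m) + M₁ := by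
  have hP := isConjInvariant_Icc hαreal hαconj hPreal hPconj
  have hα : Function.Injective fun m : Finset.Icc 1 (M₀ + 2 * M₁) => α m := fun m n hmn => by
    by_contra hne
    exact hdist m m.2 n n.2 (Subtype.coe_ne_coe.2 hne) hmn
  have hK (m : Finset.Icc 1 (M₀ + 2 * M₁)) : (P m).degree = K m := hdeg m m.2
  have hkernel : frKernel (M₀ + 2 * M₁) α P =
      expKernel (fun m : Finset.Icc 1 (M₀ + 2 * M₁) => α m) (fun m => P m) :=
    _root_.funext fun t => (Finset.sum_coe_sort _ _).symm
  have hNneg : ∀ m ∈ Finset.Icc 1 M₀, calNneg (K m) (P m).leadingCoeff.re =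
      calNpos (K m) (-(P m).leadingCoeff.re) := fun m hm =>
    calNneg_eq_calNpos_neg <| hP.leadingCoeff_re_ne_zero hα hK (m := ⟨m, by grind⟩) (hαreal m hm)
  obtain ⟨hpos, hneg⟩ := Npos_and_Nneg_hankelForm_expKernel hP hα (fun m => hre m m.2) hK
  rw [hkernel, hpos, hneg, Finset.sum_congr rfl hNneg,
    ← sum_posBlockDim_Icc K (fun m => (P m).leadingCoeff.re) hαreal hαim hαconj,
    ← sum_posBlockDim_Icc K (fun m => -(P m).leadingCoeff.re) hαreal hαim hαconj]
  exact ⟨Finset.sum_coe_sort _ fun m => posBlockDim (α m) (K m) (P m).leadingCoeff.re,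
    Finset.sum_coe_sort _ fun m => posBlockDim (α m) (K m) (-(P m).leadingCoeff.re)⟩

end
end

section
/- Let Q_C(f) = ∫₀^∞∫₀^∞ ( (t+s)^{−1} + h(t+s) ) f(s) conj(f(t)) ds dt for f ∈ L²(0,∞) (the Carleman part converges absolutely by Hilbert's inequality ∫∫ |f(s)||f(t)|/(t+s) ds dt ≤ π‖f‖²). Then N_-(Q_C) = N_-(Q_h). In particular, Q_C(f) ≥ 0 for all f ∈ L²(0,∞) if and only if Q_h(f) ≥ 0 for all f ∈ L²(0,∞). -/
open MeasureTheory Complex Polynomial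

noncomputable section

/-!
Hankel forms are symmetric with respect to the right shift `S f (t) = f (t - 1)` of `L²(0,∞)`, and
the Laplace transform `L` turns `S` into multiplication by `e^{-x}`. The Carleman form is
`∫ |L f|² ≥ 0`, so adding it to `Q_h` can only shrink the set of negative subspaces.

For the converse, let `p` be a real polynomial. If `1 - p` vanishes to high order at the points
`e^{-α_m}`, then `Q_h (p(S) f) = Q_h f`, whereas the Carleman form of `p(S) f` is
`∫ p(e^{-x})² |L f|²`. Polynomials `p_n` of this kind can be chosen to decrease to `0` almost
everywhere on `[0,1]`, so that `Q_C (p_n(S) f)` decreases to `Q_h f`. By compactness of the unit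
sphere, if `Q_h < 0` on a finite-dimensional `V`, then `Q_C < 0` on `p_n(S) V` for some `n`.
-/

open Filter Topology
open scoped ComplexConjugate

section NegativeIndex

lemma continuous_quadraticForm {V : Type*} [NormedAddCommGroup V] [NormedSpace ℝ V]
    [FiniteDimensional ℝ V] (Q : QuadraticForm ℝ V) : Continuous Q := by
  have hQ : ⇑Q = fun v => (QuadraticMap.associated Q).toContinuousBilinearMap v v := by
    ext v
    rw [LinearMap.toContinuousBilinearMap_apply, QuadraticMap.associated_eq_self_apply]
  rw [hQ]
  fun_prop

lemma exists_forall_quadraticForm_neg_of_antitone {V ι : Type*} [NormedAddCommGroup V]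
    [NormedSpace ℝ V] [FiniteDimensional ℝ V] [Preorder ι] [IsDirectedOrder ι] [Nonempty ι]
    {Q : ι → QuadraticForm ℝ V} (hanti : ∀ v, Antitone fun i => Q i v)
    (hneg : ∀ v ≠ 0, ∃ i, Q i v < 0) : ∃ i, ∀ v ≠ 0, Q i v < 0 := by
  have hmono : Monotone fun i => {v | Q i v < 0} :=
    fun i j hij v (hv : Q i v < 0) => (hanti v hij).trans_lt hv
  obtain ⟨i, hi⟩ := (isCompact_sphere (0 : V) 1).elim_directed_cover (fun i => {v | Q i v < 0})
    (fun i => isOpen_Iio.preimage (continuous_quadraticForm (Q i)))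
    (fun v hv => Set.mem_iUnion.2 (hneg v (ne_zero_of_mem_unit_sphere ⟨v, hv⟩)))
    hmono.directed_le
  refine ⟨i, fun v hv => ?_⟩
  have hunit : Q i (‖v‖⁻¹ • v) < 0 :=
    hi (by rw [mem_sphere_zero_iff_norm, norm_smul, norm_inv, norm_norm,
      inv_mul_cancel₀ (norm_ne_zero_iff.2 hv)])
  rw [QuadraticMap.map_smul, smul_eq_mul] at hunit
  exact neg_of_mul_neg_right hunit (mul_self_nonneg _)

variable {E : Type*} [NormedAddCommGroup E] [NormedSpace ℂ E] {Q Q' : QuadraticForm ℝ E}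
  {T : ℕ → E →ₗ[ℂ] E}

lemma exists_forall_mem_neg_of_antitone (hanti : ∀ f, Antitone fun n => Q (T n f))
    {V : Submodule ℂ E} [FiniteDimensional ℂ V] (hV : ∀ f ∈ V, f ≠ 0 → ∃ n, Q (T n f) < 0) :
    ∃ n, ∀ f ∈ V, f ≠ 0 → Q (T n f) < 0 := by
  have := FiniteDimensional.complexToReal V
  obtain ⟨n, hn⟩ := exists_forall_quadraticForm_neg_of_antitone
    (Q := fun n => Q.comp (((T n).comp V.subtype).restrictScalars ℝ)) (fun v => hanti v)
    (fun v hv => hV v v.2 (by simpa using hv))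
  exact ⟨n, fun f hf hf0 => hn ⟨f, hf⟩ (by simpa using hf0)⟩

lemma exists_finrank_map_eq_of_neg {T : E →ₗ[ℂ] E} {V : Submodule ℂ E}
    [FiniteDimensional ℂ V] (hneg : ∀ f ∈ V, f ≠ 0 → Q (T f) < 0) :
    FiniteDimensional ℂ (V.map T) ∧ Module.finrank ℂ (V.map T) = Module.finrank ℂ V ∧
      ∀ g ∈ V.map T, g ≠ 0 → Q g < 0 := by
  refine ⟨inferInstance, ?_, ?_⟩
  · have hinj : Function.Injective (T.domRestrict V) := by
      refine (injective_iff_map_eq_zero _).2 fun f hf => ?_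
      by_contra hf0
      have := hneg f f.2 (by simpa using hf0)
      rw [LinearMap.domRestrict_apply] at hf
      simp [hf] at this
    rw [← LinearMap.range_domRestrict, LinearMap.finrank_range_of_inj hinj]
  · rintro _ ⟨f, hf, rfl⟩ hTf
    exact hneg f hf (by rintro rfl; simp at hTf)

theorem Nneg_eq_of_antitone_of_tendsto (hle : ∀ f, Q f ≤ Q' f)
    (hanti : ∀ f, Antitone fun n => Q' (T n f))
    (hlim : ∀ f, Tendsto (fun n => Q' (T n f)) atTop (𝓝 (Q f))) : Nneg Q' = Nneg Q := by
  unfold Nneg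
  congr 1
  ext d
  constructor
  · rintro ⟨V, hfin, hd, hneg⟩
    exact ⟨V, hfin, hd, fun f hf hf0 => (hle f).trans_lt (hneg f hf hf0)⟩
  · rintro ⟨V, hfin, rfl, hneg⟩
    obtain ⟨n, hn⟩ := exists_forall_mem_neg_of_antitone hanti fun f hf hf0 =>
      ((hlim f).eventually_lt_const (hneg f hf hf0)).exists
    exact ⟨V.map (T n), exists_finrank_map_eq_of_neg hn⟩

end NegativeIndex

section HilbertInequality

lemma ae_pos_halfLineMeasure : ∀ᵐ t ∂halfLineMeasure, 0 < t := ae_restrict_mem measurableSet_Ioi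

lemma ae_pos_prod_halfLineMeasure :
    ∀ᵐ p ∂(halfLineMeasure.prod halfLineMeasure), 0 < p.1 ∧ 0 < p.2 := by
  rw [Measure.prod_restrict]
  exact ae_restrict_mem (measurableSet_Ioi.prod measurableSet_Ioi)

lemma hasDerivAt_two_mul_arctan_sqrt_div {s t : ℝ} (hs : 0 < s) (ht : 0 < t) :
    HasDerivAt (fun t : ℝ => 2 * Real.arctan √(t / s)) (√(s / t) / (s + t)) t := by
  have hderiv := ((((hasDerivAt_id t).div_const s).sqrt
    (div_pos ht hs).ne').arctan).const_mul 2
  refine hderiv.congr_deriv ?_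
  have : 0 < √s := Real.sqrt_pos.2 hs
  have : 0 < √t := Real.sqrt_pos.2 ht
  rw [id, Real.sqrt_div hs.le, Real.sqrt_div ht.le, div_pow, Real.sq_sqrt ht.le,
    Real.sq_sqrt hs.le]
  field_simp

lemma tendsto_two_mul_arctan_sqrt_div {s : ℝ} (hs : 0 < s) :
    Tendsto (fun t : ℝ => 2 * Real.arctan √(t / s)) atTop (𝓝 (2 * (Real.pi / 2))) :=
  ((tendsto_nhds_of_tendsto_nhdsWithin Real.tendsto_arctan_atTop).comp
    (Real.tendsto_sqrt_atTop.comp (tendsto_id.atTop_div_const hs))).const_mul 2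

lemma integrable_sqrt_div_div_add {s : ℝ} (hs : 0 < s) :
    Integrable (fun t : ℝ => √(s / t) / (s + t)) halfLineMeasure :=
  integrableOn_Ioi_deriv_of_nonneg (by fun_prop)
    (fun _ ht => hasDerivAt_two_mul_arctan_sqrt_div hs ht)
    (fun _ ht => div_nonneg (Real.sqrt_nonneg _) (add_pos hs ht).le)
    (tendsto_two_mul_arctan_sqrt_div hs)

lemma integral_sqrt_div_div_add {s : ℝ} (hs : 0 < s) :
    ∫ t, √(s / t) / (s + t) ∂halfLineMeasure = Real.pi := by
  rw [integral_Ioi_of_hasDerivAt_of_nonneg (by fun_prop)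
    (fun _ ht => hasDerivAt_two_mul_arctan_sqrt_div hs ht)
    (fun _ ht => div_nonneg (Real.sqrt_nonneg _) (add_pos hs ht).le)
    (tendsto_two_mul_arctan_sqrt_div hs)]
  simp only [zero_div, Real.sqrt_zero, Real.arctan_zero, mul_zero, sub_zero]
  ring

variable {f g : ℝ → ℂ}

lemma integrable_sq_norm_mul_sqrt_div_div_add (hf : MemLp f 2 halfLineMeasure) :
    Integrable (fun p : ℝ × ℝ => ‖f p.2‖ ^ 2 * (√(p.2 / p.1) / (p.2 + p.1)))
      (halfLineMeasure.prod halfLineMeasure) := by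
  have hsq : Integrable (fun s => ‖f s‖ ^ 2) halfLineMeasure :=
    hf.integrable_norm_pow two_ne_zero
  have hmeas : AEStronglyMeasurable (fun p : ℝ × ℝ => ‖f p.2‖ ^ 2 * (√(p.2 / p.1) / (p.2 + p.1)))
      (halfLineMeasure.prod halfLineMeasure) :=
    hsq.1.comp_snd.mul (by fun_prop : Measurable _).aestronglyMeasurable
  rw [integrable_prod_iff' hmeas]
  constructor
  · filter_upwards [ae_pos_halfLineMeasure] with s hs
    exact (integrable_sqrt_div_div_add hs).const_mul _
  · refine (hsq.mul_const Real.pi).congr ?_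
    filter_upwards [ae_pos_halfLineMeasure] with s hs
    rw [← integral_sqrt_div_div_add hs, ← integral_const_mul]
    refine integral_congr_ae ?_
    filter_upwards [ae_pos_halfLineMeasure] with t ht
    rw [Real.norm_of_nonneg (by positivity)]

lemma mul_le_sq_mul_add_sq_mul_of_mul_eq_one {a b x y : ℝ} (ha : 0 ≤ a) (hb : 0 ≤ b)
    (hy : 0 ≤ y) (hxy : x * y = 1) : a * b ≤ a ^ 2 * x + b ^ 2 * y := by
  have hsq : (a * x - b) ^ 2 * y = a ^ 2 * x + b ^ 2 * y - 2 * (a * b) := by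
    linear_combination (a ^ 2 * x - 2 * (a * b)) * hxy
  linarith [mul_nonneg (sq_nonneg (a * x - b)) hy, mul_nonneg ha hb]

lemma integrable_norm_mul_norm_div_add (hf : MemLp f 2 halfLineMeasure)
    (hg : MemLp g 2 halfLineMeasure) :
    Integrable (fun p : ℝ × ℝ => ‖f p.2‖ * ‖g p.1‖ / (p.1 + p.2))
      (halfLineMeasure.prod halfLineMeasure) := by
  refine ((integrable_sq_norm_mul_sqrt_div_div_add hf).add
    (integrable_sq_norm_mul_sqrt_div_div_add hg).swap).mono'
    ((hf.1.norm.comp_snd.mul hg.1.norm.comp_fst).div₀ (by fun_prop)) ?_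
  filter_upwards [ae_pos_prod_halfLineMeasure] with p ⟨ht, hs⟩
  have hweights : √(p.2 / p.1) * √(p.1 / p.2) = 1 := by
    rw [← Real.sqrt_mul (by positivity), div_mul_div_cancel₀ ht.ne', div_self hs.ne',
      Real.sqrt_one]
  rw [Real.norm_of_nonneg (by positivity)]
  simp only [Pi.add_apply, Function.comp_apply, Prod.fst_swap, Prod.snd_swap]
  rw [add_comm p.2 p.1, ← mul_div_assoc, ← mul_div_assoc, ← add_div]
  gcongr
  exact mul_le_sq_mul_add_sq_mul_of_mul_eq_one (norm_nonneg _) (norm_nonneg _)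
    (Real.sqrt_nonneg _) hweights

end HilbertInequality

section HankelPairing

/-- The real quadratic form `f ↦ Re B(f, f)` of a sesquilinear form `B`. -/
def reQuadraticForm {E : Type*} [NormedAddCommGroup E] [NormedSpace ℂ E]
    (B : E →ₗ[ℂ] E →ₗ⋆[ℂ] ℂ) : QuadraticForm ℝ E :=
  LinearMap.BilinMap.toQuadraticMap <| LinearMap.mk₂ ℝ (fun f g => (B f g).re)
    (fun f f' g => by rw [map_add, LinearMap.add_apply, add_re])
    (fun c f g => by rw [← Complex.coe_smul, map_smul, LinearMap.smul_apply, smul_eq_mul,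
      re_ofReal_mul, smul_eq_mul])
    (fun f g g' => by rw [map_add, add_re])
    (fun c f g => by rw [← Complex.coe_smul, map_smulₛₗ, conj_ofReal, smul_eq_mul,
      re_ofReal_mul, smul_eq_mul])

/-- The complex Hilbert space `L²(0,∞)`. -/
abbrev HalfLineL2 : Type := Lp ℂ 2 halfLineMeasure

/-- A measurable kernel on `(0,∞)` dominated by a multiple of the Carleman kernel `u⁻¹`. By
Hilbert's inequality its Hankel form converges absolutely on `L²(0,∞)`. -/
structure IsCarlemanBounded (k : ℝ → ℂ) : Prop where
  measurable : Measurable k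
  exists_norm_le : ∃ C : ℝ, ∀ u > 0, ‖k u‖ ≤ C / u

lemma isCarlemanBounded_inv : IsCarlemanBounded fun u => (u : ℂ)⁻¹ where
  measurable := by fun_prop
  exists_norm_le := ⟨1, fun u hu => by rw [norm_inv, norm_real, Real.norm_of_nonneg hu.le, one_div]⟩

namespace IsCarlemanBounded

variable {k l : ℝ → ℂ}

lemma add (hk : IsCarlemanBounded k) (hl : IsCarlemanBounded l) :
    IsCarlemanBounded fun u => k u + l u where
  measurable := hk.measurable.add hl.measurable
  exists_norm_le := by
    obtain ⟨C, hC⟩ := hk.exists_norm_le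
    obtain ⟨D, hD⟩ := hl.exists_norm_le
    exact ⟨C + D, fun u hu => (norm_add_le_of_le (hC u hu) (hD u hu)).trans_eq (add_div ..).symm⟩

lemma sum {ι : Type*} {s : Finset ι} {k : ι → ℝ → ℂ} (hk : ∀ i ∈ s, IsCarlemanBounded (k i)) :
    IsCarlemanBounded fun u => ∑ i ∈ s, k i u := by
  classical
  induction s using Finset.induction_on with
  | empty => exact ⟨by simp only [Finset.sum_empty, measurable_const], 0, by simp⟩
  | insert i s hi ih =>
    simp_rw [Finset.sum_insert hi]
    exact (hk i (Finset.mem_insert_self i s)).add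
      (ih fun j hj => hk j (Finset.mem_insert_of_mem hj))

lemma integrable_prod (hk : IsCarlemanBounded k) (f g : HalfLineL2) :
    Integrable (fun p : ℝ × ℝ => k (p.1 + p.2) * f p.2 * conj (g p.1))
      (halfLineMeasure.prod halfLineMeasure) := by
  obtain ⟨C, hC⟩ := hk.exists_norm_le
  have hkmeas : Measurable fun p : ℝ × ℝ => k (p.1 + p.2) :=
    hk.measurable.comp (measurable_fst.add measurable_snd)
  refine ((integrable_norm_mul_norm_div_add (Lp.memLp f) (Lp.memLp g)).const_mul C).mono'
    ((hkmeas.aestronglyMeasurable.mul (Lp.aestronglyMeasurable f).comp_snd).mul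
      (continuous_conj.comp_aestronglyMeasurable (Lp.aestronglyMeasurable g)).comp_fst) ?_
  filter_upwards [ae_pos_prod_halfLineMeasure] with p ⟨ht, hs⟩
  calc ‖k (p.1 + p.2) * f p.2 * conj (g p.1)‖
      = ‖k (p.1 + p.2)‖ * ‖f p.2‖ * ‖g p.1‖ := by rw [norm_mul, norm_mul, RCLike.norm_conj]
    _ ≤ C / (p.1 + p.2) * ‖f p.2‖ * ‖g p.1‖ := by gcongr; exact hC _ (add_pos ht hs)
    _ = C * (‖f p.2‖ * ‖g p.1‖ / (p.1 + p.2)) := by ring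

end IsCarlemanBounded

/-- The sesquilinear version of `hankelForm`. -/
def hankelPairing (k : ℝ → ℂ) (f g : HalfLineL2) : ℂ :=
  ∫ t, ∫ s, k (t + s) * f s * conj (g t) ∂halfLineMeasure ∂halfLineMeasure

lemma hankelForm_eq_re_hankelPairing (k : ℝ → ℂ) (f : HalfLineL2) :
    hankelForm k f = (hankelPairing k f f).re := rfl

variable {k l : ℝ → ℂ}

lemma hankelPairing_eq_integral_prod (hk : IsCarlemanBounded k) (f g : HalfLineL2) :
    hankelPairing k f g = ∫ p : ℝ × ℝ, k (p.1 + p.2) * f p.2 * conj (g p.1)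
      ∂(halfLineMeasure.prod halfLineMeasure) :=
  (integral_prod _ (hk.integrable_prod f g)).symm

lemma hankelPairing_add_kernel (hk : IsCarlemanBounded k) (hl : IsCarlemanBounded l)
    (f g : HalfLineL2) :
    hankelPairing (fun u => k u + l u) f g = hankelPairing k f g + hankelPairing l f g := by
  rw [hankelPairing_eq_integral_prod (hk.add hl), hankelPairing_eq_integral_prod hk,
    hankelPairing_eq_integral_prod hl,
    ← integral_add (hk.integrable_prod f g) (hl.integrable_prod f g)]
  simp only [add_mul]

lemma hankelPairing_add_left (hk : IsCarlemanBounded k) (f f' g : HalfLineL2) :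
    hankelPairing k (f + f') g = hankelPairing k f g + hankelPairing k f' g := by
  simp only [hankelPairing_eq_integral_prod hk]
  rw [← integral_add (hk.integrable_prod f g) (hk.integrable_prod f' g)]
  refine integral_congr_ae ?_
  filter_upwards [Measure.quasiMeasurePreserving_snd.ae (Lp.coeFn_add f f')] with p hp
  rw [hp, Pi.add_apply, mul_add, add_mul]

lemma hankelPairing_add_right (hk : IsCarlemanBounded k) (f g g' : HalfLineL2) :
    hankelPairing k f (g + g') = hankelPairing k f g + hankelPairing k f g' := by
  simp only [hankelPairing_eq_integral_prod hk]
  rw [← integral_add (hk.integrable_prod f g) (hk.integrable_prod f g')]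
  refine integral_congr_ae ?_
  filter_upwards [Measure.quasiMeasurePreserving_fst.ae (Lp.coeFn_add g g')] with p hp
  rw [hp, Pi.add_apply, map_add, mul_add]

lemma hankelPairing_smul_left (k : ℝ → ℂ) (c : ℂ) (f g : HalfLineL2) :
    hankelPairing k (c • f) g = c * hankelPairing k f g := by
  simp only [hankelPairing, ← integral_const_mul]
  congr! 2
  refine integral_congr_ae ?_
  filter_upwards [Lp.coeFn_smul c f] with s hs
  rw [hs, Pi.smul_apply, smul_eq_mul]
  ring

lemma hankelPairing_smul_right (k : ℝ → ℂ) (c : ℂ) (f g : HalfLineL2) :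
    hankelPairing k f (c • g) = conj c * hankelPairing k f g := by
  simp only [hankelPairing, ← integral_const_mul]
  refine integral_congr_ae ?_
  filter_upwards [Lp.coeFn_smul c g] with t ht
  congr! 2
  rw [ht, Pi.smul_apply, smul_eq_mul, map_mul]
  ring

/-- `hankelPairing` as a bundled sesquilinear form. -/
def hankelSesq (hk : IsCarlemanBounded k) : HalfLineL2 →ₗ[ℂ] HalfLineL2 →ₗ⋆[ℂ] ℂ :=
  LinearMap.mk₂'ₛₗ (RingHom.id ℂ) (starRingEnd ℂ) (hankelPairing k)
    (hankelPairing_add_left hk) (hankelPairing_smul_left k)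
    (hankelPairing_add_right hk) (hankelPairing_smul_right k)

lemma coe_reQuadraticForm_hankelSesq (hk : IsCarlemanBounded k) :
    ⇑(reQuadraticForm (hankelSesq hk)) = hankelForm k := rfl

end HankelPairing

section Laplace

/-- The Laplace transform on `L²(0,∞)`. -/
def laplace (f : HalfLineL2) (x : ℝ) : ℂ :=
  ∫ t, Complex.exp (-x * t) * f t ∂halfLineMeasure

lemma norm_exp_mul_mul_conj (t s x : ℝ) (a b : ℂ) :
    ‖Complex.exp (-(t + s) * x) * (a * conj b)‖ = Real.exp (-(t + s) * x) * (‖a‖ * ‖b‖) := by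
  rw [norm_mul, norm_exp, norm_mul, RCLike.norm_conj]
  norm_cast

lemma integrable_exp_mul_mul_conj (f g : HalfLineL2) :
    Integrable (fun q : ℝ × ℝ × ℝ =>
        Complex.exp (-(q.2.1 + q.2.2) * q.1) * (f q.2.2 * conj (g q.2.1)))
      (halfLineMeasure.prod (halfLineMeasure.prod halfLineMeasure)) := by
  have hmeas : AEStronglyMeasurable (fun q : ℝ × ℝ × ℝ =>
      Complex.exp (-(q.2.1 + q.2.2) * q.1) * (f q.2.2 * conj (g q.2.1)))
      (halfLineMeasure.prod (halfLineMeasure.prod halfLineMeasure)) :=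
    (by fun_prop : Continuous _).aestronglyMeasurable.mul
      ((Lp.aestronglyMeasurable f).comp_snd.mul
        (continuous_conj.comp_aestronglyMeasurable (Lp.aestronglyMeasurable g)).comp_fst).comp_snd
  rw [integrable_prod_iff' hmeas]
  simp only [norm_exp_mul_mul_conj]
  constructor
  · filter_upwards [ae_pos_prod_halfLineMeasure] with p ⟨ht, hs⟩
    refine (integrableOn_exp_mul_complex_Ioi (a := -(p.1 + p.2)) ?_ 0).mul_const _
    simp only [neg_re, add_re, ofReal_re]
    linarith
  · refine (integrable_norm_mul_norm_div_add (Lp.memLp f) (Lp.memLp g)).congr ?_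
    filter_upwards [ae_pos_prod_halfLineMeasure] with p ⟨ht, hs⟩
    rw [integral_mul_const, integral_exp_mul_Ioi (by linarith), mul_zero, Real.exp_zero,
      neg_div_neg_eq]
    ring

lemma integral_exp_mul_mul_conj_eq_laplace (f g : HalfLineL2) (x : ℝ) :
    ∫ p : ℝ × ℝ, Complex.exp (-(p.1 + p.2) * x) * (f p.2 * conj (g p.1))
      ∂(halfLineMeasure.prod halfLineMeasure) = laplace f x * conj (laplace g x) := by
  rw [mul_comm, laplace, laplace, ← integral_conj, ← integral_prod_mul]
  congr with p
  rw [map_mul, ← exp_conj, map_mul, map_neg, conj_ofReal, conj_ofReal,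
    show -(p.1 + p.2 : ℂ) * x = -x * p.1 + -x * p.2 by ring, Complex.exp_add]
  ring

lemma integral_exp_mul_mul_conj_eq_inv {t s : ℝ} (ht : 0 < t) (hs : 0 < s) (a b : ℂ) :
    ∫ x : ℝ, Complex.exp (-(t + s) * x) * (a * conj b) ∂halfLineMeasure =
      ((t + s : ℝ) : ℂ)⁻¹ * a * conj b := by
  have hneg : (-(t + s) : ℂ).re < 0 := by
    simp only [neg_re, add_re, ofReal_re]
    linarith
  rw [integral_mul_const, integral_exp_mul_complex_Ioi hneg, ofReal_zero, mul_zero,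
    Complex.exp_zero, neg_div_neg_eq, one_div, ofReal_add, mul_assoc]

lemma integrable_laplace_mul_conj (f g : HalfLineL2) :
    Integrable (fun x => laplace f x * conj (laplace g x)) halfLineMeasure := by
  simpa only [integral_exp_mul_mul_conj_eq_laplace] using
    (integrable_exp_mul_mul_conj f g).integral_prod_left

lemma hankelPairing_inv (f g : HalfLineL2) :
    hankelPairing (fun u => (u : ℂ)⁻¹) f g =
      ∫ x, laplace f x * conj (laplace g x) ∂halfLineMeasure := by
  simp only [← integral_exp_mul_mul_conj_eq_laplace]
  rw [hankelPairing_eq_integral_prod isCarlemanBounded_inv,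
    integral_integral_swap (integrable_exp_mul_mul_conj f g)]
  refine integral_congr_ae ?_
  filter_upwards [ae_pos_prod_halfLineMeasure] with p ⟨ht, hs⟩
  rw [integral_exp_mul_mul_conj_eq_inv ht hs]

lemma integrable_norm_laplace_sq (f : HalfLineL2) :
    Integrable (fun x => ‖laplace f x‖ ^ 2) halfLineMeasure := by
  simpa only [norm_mul, RCLike.norm_conj, sq] using (integrable_laplace_mul_conj f f).norm

lemma hankelForm_inv (f : HalfLineL2) :
    hankelForm (fun u => (u : ℂ)⁻¹) f = ∫ x, ‖laplace f x‖ ^ 2 ∂halfLineMeasure := by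
  simp only [hankelForm_eq_re_hankelPairing, hankelPairing_inv, mul_conj, normSq_eq_norm_sq]
  rw [integral_complex_ofReal, ofReal_re]

end Laplace

section ExponentialPolynomials

/-- The function `u ↦ P(u) e^{-αu}`. -/
def expPoly (α : ℂ) (P : ℂ[X]) (u : ℝ) : ℂ := P.eval (u : ℂ) * Complex.exp (-α * u)

variable {α : ℂ}

lemma continuous_expPoly (α : ℂ) (P : ℂ[X]) : Continuous (expPoly α P) := by
  have := P.continuous
  unfold expPoly
  fun_prop

lemma expPoly_add_right (α : ℂ) (P : ℂ[X]) (t s : ℝ) :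
    expPoly α P (t + s) = Complex.exp (-α * t) * expPoly α (taylor (t : ℂ) P) s := by
  simp only [expPoly, taylor_eval, ofReal_add, mul_add, Complex.exp_add, add_comm (s : ℂ)]
  ring

lemma pow_mul_exp_neg_mul_le {a u : ℝ} (ha : 0 < a) (hu : 0 < u) (n : ℕ) :
    u ^ n * Real.exp (-(a * u)) ≤ n.factorial / a ^ n := by
  have hexp := Real.pow_div_factorial_le_exp (x := a * u) (by positivity) n
  rw [div_le_iff₀ (by positivity), mul_pow] at hexp
  rw [Real.exp_neg, ← div_eq_mul_inv, div_le_div_iff₀ (Real.exp_pos _) (by positivity)]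
  linarith

lemma norm_exp_neg_mul_ofReal (α : ℂ) (u : ℝ) :
    ‖Complex.exp (-α * u)‖ = Real.exp (-(α.re / 2 * u)) * Real.exp (-(α.re / 2 * u)) := by
  rw [norm_exp, ← Real.exp_add, re_mul_ofReal, neg_re]
  ring_nf

lemma exists_norm_expPoly_le (hα : 0 < α.re) (P : ℂ[X]) :
    ∃ C, 0 ≤ C ∧ ∀ u : ℝ, 0 < u → ‖expPoly α P u‖ ≤ C * Real.exp (-(α.re / 2 * u)) := by
  induction P using Polynomial.induction_on' with
  | add P Q hP hQ =>
    obtain ⟨C, hC0, hC⟩ := hP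
    obtain ⟨D, hD0, hD⟩ := hQ
    refine ⟨C + D, add_nonneg hC0 hD0, fun u hu => ?_⟩
    rw [expPoly, eval_add, add_mul, add_mul]
    exact norm_add_le_of_le (hC u hu) (hD u hu)
  | monomial n a =>
    refine ⟨‖a‖ * (n.factorial / (α.re / 2) ^ n), by positivity, fun u hu => ?_⟩
    rw [expPoly, eval_monomial, norm_mul, norm_mul, norm_pow, norm_real,
      Real.norm_of_nonneg hu.le, norm_exp_neg_mul_ofReal, ← mul_assoc, mul_assoc ‖a‖]
    gcongr
    exact pow_mul_exp_neg_mul_le (half_pos hα) hu n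

lemma memLp_exp_neg_mul {a : ℝ} (ha : 0 < a) :
    MemLp (fun u : ℝ => Real.exp (-(a * u))) 2 halfLineMeasure := by
  rw [memLp_two_iff_integrable_sq (by fun_prop)]
  refine (integrableOn_exp_mul_Ioi (a := -(2 * a)) (by linarith) 0).integrable.congr
    (ae_of_all _ fun u => ?_)
  simp only [← Real.exp_nat_mul]
  push_cast
  ring_nf

lemma memLp_expPoly (hα : 0 < α.re) (P : ℂ[X]) : MemLp (expPoly α P) 2 halfLineMeasure := by
  obtain ⟨C, -, hC⟩ := exists_norm_expPoly_le hα P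
  refine ((memLp_exp_neg_mul (half_pos hα)).const_mul C).mono'
    (continuous_expPoly α P).aestronglyMeasurable ?_
  filter_upwards [ae_pos_halfLineMeasure] with u hu using hC u hu

lemma integrable_expPoly_mul (hα : 0 < α.re) (P : ℂ[X]) (f : HalfLineL2) :
    Integrable (fun u => expPoly α P u * f u) halfLineMeasure :=
  (memLp_expPoly hα P).integrable_mul (Lp.memLp f)

lemma isCarlemanBounded_expPoly (hα : 0 < α.re) (P : ℂ[X]) :
    IsCarlemanBounded (expPoly α P) where
  measurable := (continuous_expPoly α P).measurable
  exists_norm_le := by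
    obtain ⟨C, hC0, hC⟩ := exists_norm_expPoly_le hα (X * P)
    refine ⟨C, fun u hu => (le_div_iff₀' hu).2 ?_⟩
    have hdecay : Real.exp (-(α.re / 2 * u)) ≤ 1 :=
      Real.exp_le_one_iff.2 (neg_nonpos.2 (by positivity))
    calc u * ‖expPoly α P u‖ = ‖expPoly α (X * P) u‖ := by
          rw [expPoly, expPoly, eval_mul, eval_X, mul_assoc, norm_mul (u : ℂ), norm_real,
            Real.norm_of_nonneg hu.le]
      _ ≤ C * Real.exp (-(α.re / 2 * u)) := hC u hu
      _ ≤ C := mul_le_of_le_one_right hC0 hdecay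

/-- The functional `f ↦ ∫₀^∞ P(t) e^{-αt} f(t) dt` on `L²(0,∞)`, linear also in `P`. -/
def expPolyFunctional (hα : 0 < α.re) : ℂ[X] →ₗ[ℂ] HalfLineL2 →ₗ[ℂ] ℂ :=
  LinearMap.mk₂ ℂ (fun P f => ∫ t, expPoly α P t * f t ∂halfLineMeasure)
    (fun P Q f => by
      rw [← integral_add (integrable_expPoly_mul hα P f) (integrable_expPoly_mul hα Q f)]
      simp only [expPoly, eval_add, add_mul])
    (fun c P f => by
      rw [smul_eq_mul, ← integral_const_mul]
      simp only [expPoly, eval_smul, smul_eq_mul, mul_assoc])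
    (fun P f g => by
      rw [← integral_add (integrable_expPoly_mul hα P f) (integrable_expPoly_mul hα P g)]
      refine integral_congr_ae ?_
      filter_upwards [Lp.coeFn_add f g] with t ht
      rw [ht, Pi.add_apply, mul_add])
    (fun c P f => by
      rw [smul_eq_mul, ← integral_const_mul]
      refine integral_congr_ae ?_
      filter_upwards [Lp.coeFn_smul c f] with t ht
      rw [ht, Pi.smul_apply, smul_eq_mul, mul_left_comm])

lemma expPolyFunctional_apply (hα : 0 < α.re) (P : ℂ[X]) (f : HalfLineL2) :
    expPolyFunctional hα P f = ∫ t, expPoly α P t * f t ∂halfLineMeasure := rfl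

lemma laplace_eq_expPolyFunctional {x : ℝ} (hx : 0 < (x : ℂ).re) (f : HalfLineL2) :
    laplace f x = expPolyFunctional hx 1 f := by
  simp only [laplace, expPolyFunctional_apply, expPoly, eval_one, one_mul]

end ExponentialPolynomials

section Shift

/-- Right translation by `1` on functions on `(0,∞)`, with value `0` on `(0,1]`. -/
def rightTranslate (f : ℝ → ℂ) : ℝ → ℂ := (Set.Ioi 1).indicator fun t => f (t - 1)

lemma halfLineMeasure_restrict_Ioi_one :
    halfLineMeasure.restrict (Set.Ioi 1) = volume.restrict (Set.Ioi 1) := by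
  rw [Measure.restrict_restrict measurableSet_Ioi,
    Set.inter_eq_left.2 (Set.Ioi_subset_Ioi zero_le_one)]

lemma measurePreserving_sub_one_Ioi :
    MeasurePreserving (fun t : ℝ => t - 1) (halfLineMeasure.restrict (Set.Ioi 1))
      halfLineMeasure := by
  have hpre : (fun t : ℝ => t - 1) ⁻¹' Set.Ioi 0 = Set.Ioi 1 := by
    rw [Set.preimage_sub_const_Ioi, zero_add]
  rw [halfLineMeasure_restrict_Ioi_one, ← hpre]
  exact (measurePreserving_sub_right volume 1).restrict_preimage measurableSet_Ioi

lemma memLp_rightTranslate {f : ℝ → ℂ} (hf : MemLp f 2 halfLineMeasure) :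
    MemLp (rightTranslate f) 2 halfLineMeasure :=
  (memLp_indicator_iff_restrict measurableSet_Ioi).2
    (hf.comp_measurePreserving measurePreserving_sub_one_Ioi)

lemma rightTranslate_congr_ae {f g : ℝ → ℂ} (hfg : f =ᵐ[halfLineMeasure] g) :
    rightTranslate f =ᵐ[halfLineMeasure] rightTranslate g :=
  (ae_eq_restrict_iff_indicator_ae_eq measurableSet_Ioi).1
    (measurePreserving_sub_one_Ioi.quasiMeasurePreserving.ae_eq_comp hfg)

/-- Right translation by `1` on `L²(0,∞)`: Hankel forms are symmetric with respect to it, and the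
Laplace transform turns it into multiplication by `e^{-x}`. -/
def shift : Module.End ℂ HalfLineL2 where
  toFun f := (memLp_rightTranslate (Lp.memLp f)).toLp _
  map_add' f g := by
    rw [← MemLp.toLp_add, MemLp.toLp_eq_toLp_iff]
    exact (rightTranslate_congr_ae (Lp.coeFn_add f g)).trans (.of_eq (Set.indicator_add ..))
  map_smul' c f := by
    rw [← MemLp.toLp_const_smul, MemLp.toLp_eq_toLp_iff]
    exact (rightTranslate_congr_ae (Lp.coeFn_smul c f)).trans
      (.of_eq (Set.indicator_const_smul (Set.Ioi 1) c fun t => f (t - 1)))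

lemma coeFn_shift (f : HalfLineL2) : shift f =ᵐ[halfLineMeasure] rightTranslate f :=
  MemLp.coeFn_toLp (memLp_rightTranslate (Lp.memLp f))

lemma integral_comp_shift {F : ℝ → ℂ → ℂ} (hF : ∀ t, F t 0 = 0) (f : HalfLineL2) :
    ∫ t, F t (shift f t) ∂halfLineMeasure = ∫ t, F (t + 1) (f t) ∂halfLineMeasure := by
  have hshift : (fun t => F t (shift f t)) =ᵐ[halfLineMeasure]
      (Set.Ioi 1).indicator fun t => F (t - 1 + 1) (f (t - 1)) := by
    filter_upwards [coeFn_shift f] with t ht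
    by_cases h1 : t ∈ Set.Ioi 1 <;> simp [ht, rightTranslate, h1, hF]
  rw [integral_congr_ae hshift, integral_indicator measurableSet_Ioi]
  exact measurePreserving_sub_one_Ioi.integral_comp
    (MeasurableEquiv.subRight (1 : ℝ)).measurableEmbedding fun t => F (t + 1) (f t)

lemma isAdjointPair_hankelSesq_shift {k : ℝ → ℂ} (hk : IsCarlemanBounded k) :
    LinearMap.IsAdjointPair (hankelSesq hk) (hankelSesq hk) shift shift := fun f g => by
  change hankelPairing k (shift f) g = hankelPairing k f (shift g)
  have hleft (t : ℝ) := integral_comp_shift (F := fun s z => k (t + s) * z * conj (g t))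
    (fun s => by rw [mul_zero, zero_mul]) f
  have hright := integral_comp_shift
    (F := fun t z => ∫ s, k (t + s) * f s * conj z ∂halfLineMeasure)
    (fun t => by simp only [map_zero, mul_zero, integral_zero]) g
  simp only [hankelPairing, hleft, hright, add_right_comm, ← add_assoc]

lemma isAdjointPair_aeval {R M N : Type*} [CommRing R] [AddCommGroup M] [Module R M]
    [AddCommGroup N] [Module R N] {I : R →+* R} {B : M →ₗ[R] M →ₛₗ[I] N} {S T : Module.End R M}
    (hST : LinearMap.IsAdjointPair B B S T) (p : R[X]) :
    LinearMap.IsAdjointPair B B (aeval S (p.map I)) (aeval T p) := by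
  induction p using Polynomial.induction_on with
  | C a => intro f g; simp [Module.algebraMap_end_apply]
  | add p q hp hq =>
    rw [Polynomial.map_add, map_add, map_add]
    exact hp.add hq
  | monomial n a hn =>
    rw [pow_succ, ← mul_assoc, Polynomial.map_mul, map_mul, mul_comm _ X, map_mul,
      Polynomial.map_X, aeval_X, aeval_X]
    exact hn.mul hST

lemma apply_aeval_of_apply_eq_smul {R M N : Type*} [CommRing R] [AddCommGroup M] [Module R M]
    [AddCommGroup N] [Module R N] {ℓ : M →ₗ[R] N} {S : Module.End R M} {c : R}
    (hS : ∀ f, ℓ (S f) = c • ℓ f) (p : R[X]) (f : M) : ℓ (aeval S p f) = p.eval c • ℓ f := by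
  induction p using Polynomial.induction_on generalizing f with
  | C a => simp [Module.algebraMap_end_apply]
  | add p q hp hq => rw [map_add, LinearMap.add_apply, map_add, hp, hq, eval_add, add_smul]
  | monomial n a hn =>
    rw [pow_succ, ← mul_assoc, map_mul, Module.End.mul_apply, hn, aeval_X, hS, eval_mul_X, mul_smul]

lemma expPolyFunctional_shift {α : ℂ} (hα : 0 < α.re) (P : ℂ[X]) (f : HalfLineL2) :
    expPolyFunctional hα P (shift f) =
      Complex.exp (-α) * expPolyFunctional hα (taylor 1 P) f := by
  rw [expPolyFunctional_apply, integral_comp_shift (F := fun t z => expPoly α P t * z)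
    (fun t => mul_zero _), expPolyFunctional_apply, ← integral_const_mul]
  simp only [add_comm _ (1 : ℝ), expPoly_add_right, ofReal_one, mul_one, mul_assoc]

lemma laplace_aeval_shift (p : ℂ[X]) (f : HalfLineL2) {x : ℝ} (hx : 0 < x) :
    laplace (aeval shift p f) x = p.eval (Complex.exp (-x)) * laplace f x := by
  have hx' : 0 < (x : ℂ).re := hx
  rw [laplace_eq_expPolyFunctional hx', laplace_eq_expPolyFunctional hx']
  refine apply_aeval_of_apply_eq_smul (fun g => ?_) p f
  rw [expPolyFunctional_shift, taylor_one, C_1, smul_eq_mul]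

end Shift

section Annihilation

variable {α : ℂ} {N : ℕ} {b P : ℂ[X]}

lemma degree_taylor_sub_self_lt {r : ℂ} (hP : P.degree < (N + 1 : ℕ)) :
    (taylor r P - P).degree < N := by
  rcases eq_or_ne P 0 with rfl | hP0
  · simp
  · have hlt : (taylor r P - P).degree < P.degree := by
      simpa only [degree_taylor] using degree_sub_lt_left (degree_taylor P r)
        ((taylor_eq_zero r P).not.2 hP0) (leadingCoeff_taylor r P)
    rw [degree_eq_natDegree hP0] at hlt hP
    exact hlt.trans_le (Nat.cast_le.2 (Nat.lt_succ_iff.1 (Nat.cast_lt.1 hP)))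

lemma expPolyFunctional_aeval_shift_X_sub_C (hα : 0 < α.re) (P : ℂ[X]) (f : HalfLineL2) :
    expPolyFunctional hα P (aeval shift (X - C (Complex.exp (-α))) f) =
      Complex.exp (-α) * expPolyFunctional hα (taylor 1 P - P) f := by
  rw [map_sub, aeval_X, aeval_C, LinearMap.sub_apply, Module.algebraMap_end_apply, map_sub,
    map_smul, expPolyFunctional_shift, map_sub, LinearMap.sub_apply, smul_eq_mul, mul_sub]

lemma expPolyFunctional_aeval_shift_eq_zero (hα : 0 < α.re) (hP : P.degree < N)
    (hb : (X - C (Complex.exp (-α))) ^ N ∣ b) (f : HalfLineL2) :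
    expPolyFunctional hα P (aeval shift b f) = 0 := by
  obtain ⟨r, rfl⟩ := hb
  induction N generalizing P with
  | zero => rw [degree_eq_bot.1 (Nat.WithBot.lt_zero_iff.1 hP), map_zero, LinearMap.zero_apply]
  | succ N ih =>
    rw [pow_succ', mul_assoc, map_mul, Module.End.mul_apply,
      expPolyFunctional_aeval_shift_X_sub_C, ih (degree_taylor_sub_self_lt hP), mul_zero]

lemma integrable_expPoly_add_mul (hα : 0 < α.re) (P : ℂ[X]) (f : HalfLineL2) (t : ℝ) :
    Integrable (fun s => expPoly α P (t + s) * f s) halfLineMeasure := by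
  simpa only [expPoly_add_right, mul_assoc] using
    (integrable_expPoly_mul hα (taylor (t : ℂ) P) f).const_mul (Complex.exp (-α * t))

lemma integral_expPoly_add_mul (hα : 0 < α.re) (P : ℂ[X]) (f : HalfLineL2) (t : ℝ) :
    ∫ s, expPoly α P (t + s) * f s ∂halfLineMeasure =
      Complex.exp (-α * t) * expPolyFunctional hα (taylor (t : ℂ) P) f := by
  simp only [expPoly_add_right, mul_assoc, integral_const_mul, expPolyFunctional_apply]

end Annihilation

section FiniteRankKernel

variable {M N : ℕ} {α : ℕ → ℂ} {P : ℕ → ℂ[X]}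

lemma isCarlemanBounded_frKernel (hα : ∀ m ∈ Finset.Icc 1 M, 0 < (α m).re)
    (P : ℕ → ℂ[X]) : IsCarlemanBounded (frKernel M α P) :=
  .sum fun m hm => isCarlemanBounded_expPoly (hα m hm) (P m)

lemma hankelPairing_frKernel_aeval_shift_eq_zero {b : ℂ[X]}
    (hα : ∀ m ∈ Finset.Icc 1 M, 0 < (α m).re) (hP : ∀ m ∈ Finset.Icc 1 M, (P m).degree < N)
    (hb : ∀ m ∈ Finset.Icc 1 M, (X - C (Complex.exp (-α m))) ^ N ∣ b) (f g : HalfLineL2) :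
    hankelPairing (frKernel M α P) (aeval shift b f) g = 0 := by
  have hinner (t : ℝ) :
      ∫ s, frKernel M α P (t + s) * aeval shift b f s ∂halfLineMeasure = 0 := by
    change ∫ s, (∑ m ∈ Finset.Icc 1 M, expPoly (α m) (P m) (t + s)) * _ ∂halfLineMeasure = 0
    simp only [Finset.sum_mul]
    rw [integral_finsetSum _ fun m hm => integrable_expPoly_add_mul (hα m hm) ..]
    refine Finset.sum_eq_zero fun m hm => ?_
    rw [integral_expPoly_add_mul (hα m hm), expPolyFunctional_aeval_shift_eq_zero (hα m hm)
      ((degree_taylor (P m) t).trans_lt (hP m hm)) (hb m hm), mul_zero]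
  simp only [hankelPairing, integral_mul_const, hinner, zero_mul, integral_zero]

lemma hankelForm_frKernel_aeval_shift (hα : ∀ m ∈ Finset.Icc 1 M, 0 < (α m).re)
    (hP : ∀ m ∈ Finset.Icc 1 M, (P m).degree < N) {q : ℝ[X]}
    (hq : ∀ m ∈ Finset.Icc 1 M, (X - C (Complex.exp (-α m))) ^ N ∣ 1 - q.map ofRealHom)
    (f : HalfLineL2) :
    hankelForm (frKernel M α P) (aeval shift (q.map ofRealHom) f) =
      hankelForm (frKernel M α P) f := by
  set B := hankelSesq (isCarlemanBounded_frKernel hα P)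
  set S := aeval shift (q.map ofRealHom)
  have hleft (g g' : HalfLineL2) : B (S g) g' = B g g' := by
    have hzero : B (aeval shift (1 - q.map ofRealHom) g) g' = 0 :=
      hankelPairing_frKernel_aeval_shift_eq_zero hα hP hq g g'
    rw [map_sub, map_one, LinearMap.sub_apply, Module.End.one_apply, map_sub,
      LinearMap.sub_apply, sub_eq_zero] at hzero
    exact hzero.symm
  have hconj : (q.map ofRealHom).map (starRingEnd ℂ) = q.map ofRealHom := by
    rw [Polynomial.map_map]
    congr 1
    ext x
    exact conj_ofReal x
  have hadj : LinearMap.IsAdjointPair B B S S := by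
    have hadj' := isAdjointPair_aeval
      (isAdjointPair_hankelSesq_shift (isCarlemanBounded_frKernel hα P)) (q.map ofRealHom)
    rwa [hconj] at hadj'
  change (B (S f) (S f)).re = (B f f).re
  rw [hleft, ← hadj, hleft]

end FiniteRankKernel

section CutoffPolynomials

/-- The real polynomial whose value at a real `x` is `|x - z|²`. -/
def normSqSub (z : ℂ) : ℝ[X] := (X - C z.re) ^ 2 + C (z.im ^ 2)

lemma eval_normSqSub (z : ℂ) (x : ℝ) : (normSqSub z).eval x = ‖x - z‖ ^ 2 := by
  rw [← normSq_eq_norm_sq, normSq_apply]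
  simp [normSqSub, sq]

lemma eval_map_normSqSub (z : ℂ) : ((normSqSub z).map ofRealHom).eval z = 0 := by
  have hsub : z - z.re = z.im * I := by rw [sub_eq_iff_eq_add', re_add_im]
  simp [normSqSub, hsub, mul_pow]

variable {ι : Type*} {s : Finset ι} {z : ι → ℂ} {x : ℝ}

/-- Polynomials equal to `1` to order `N` at each point `z i` that tend to `0`, as `n → ∞`, at all
other points of `[0,1]`, provided that the `z i` lie in the closed unit disc. -/
def cutoff (s : Finset ι) (z : ι → ℂ) (N n : ℕ) : ℝ[X] :=
  1 - ∏ i ∈ s, (1 - (1 - C (1 / 4) * normSqSub (z i)) ^ n) ^ N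

lemma eval_cutoff (s : Finset ι) (z : ι → ℂ) (N n : ℕ) (x : ℝ) :
    (cutoff s z N n).eval x = 1 - ∏ i ∈ s, (1 - (1 - 1 / 4 * ‖x - z i‖ ^ 2) ^ n) ^ N := by
  simp only [cutoff, eval_sub, eval_one, eval_prod, eval_pow, eval_mul, eval_C, eval_normSqSub]

lemma X_sub_C_pow_dvd_one_sub_cutoff {i : ι} (hi : i ∈ s) (N n : ℕ) :
    (X - C (z i)) ^ N ∣ 1 - (cutoff s z N n).map ofRealHom := by
  have hroot : X - C (z i) ∣ (1 - (1 - C (1 / 4) * normSqSub (z i)) ^ n).map ofRealHom := by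
    rw [dvd_iff_isRoot, IsRoot]
    simp [eval_map_normSqSub]
  rw [cutoff, Polynomial.map_sub, Polynomial.map_one, sub_sub_cancel, Polynomial.map_prod]
  refine (pow_dvd_pow_of_dvd hroot N).trans ?_
  rw [← Polynomial.map_pow]
  exact Finset.dvd_prod_of_mem _ hi

lemma one_sub_quarter_mul_sq_mem_Icc {z : ℂ} (hz : ‖z‖ ≤ 1) (hx : x ∈ Set.Icc 0 1) :
    1 - 1 / 4 * ‖x - z‖ ^ 2 ∈ Set.Icc 0 1 := by
  have hdist : ‖x - z‖ ≤ 2 := by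
    have := norm_sub_le (x : ℂ) z
    rw [norm_real, Real.norm_of_nonneg hx.1] at this
    linarith [hx.2]
  constructor <;> nlinarith [norm_nonneg (x - z)]

lemma one_sub_pow_mem_Icc {y : ℝ} (hy : y ∈ Set.Icc 0 1) (n : ℕ) : 1 - y ^ n ∈ Set.Icc 0 1 :=
  Set.Icc.mem_iff_one_sub_mem.1 ⟨pow_nonneg hy.1 n, pow_le_one₀ hy.1 hy.2⟩

lemma eval_cutoff_mem_Icc (hz : ∀ i ∈ s, ‖z i‖ ≤ 1) (N n : ℕ) (hx : x ∈ Set.Icc 0 1) :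
    (cutoff s z N n).eval x ∈ Set.Icc 0 1 := by
  rw [eval_cutoff]
  have hfactor i (hi : i ∈ s) :=
    one_sub_pow_mem_Icc (one_sub_quarter_mul_sq_mem_Icc (hz i hi) hx) n
  exact Set.Icc.mem_iff_one_sub_mem.1
    ⟨Finset.prod_nonneg fun i hi => pow_nonneg (hfactor i hi).1 N,
      Finset.prod_le_one (fun i hi => pow_nonneg (hfactor i hi).1 N)
        fun i hi => pow_le_one₀ (hfactor i hi).1 (hfactor i hi).2⟩

lemma antitone_eval_cutoff (hz : ∀ i ∈ s, ‖z i‖ ≤ 1) (N : ℕ) (hx : x ∈ Set.Icc 0 1) :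
    Antitone fun n => (cutoff s z N n).eval x := by
  intro m n hmn
  simp only [eval_cutoff]
  have hbase i (hi : i ∈ s) := one_sub_quarter_mul_sq_mem_Icc (hz i hi) hx
  refine sub_le_sub_left (Finset.prod_le_prod (fun i hi => ?_) fun i hi => ?_) 1
  · exact pow_nonneg (one_sub_pow_mem_Icc (hbase i hi) m).1 N
  · exact pow_le_pow_left₀ (one_sub_pow_mem_Icc (hbase i hi) m).1
      (sub_le_sub_left (pow_le_pow_of_le_one (hbase i hi).1 (hbase i hi).2 hmn) 1) N

lemma tendsto_eval_cutoff (hz : ∀ i ∈ s, ‖z i‖ ≤ 1) (N : ℕ) (hx : x ∈ Set.Icc 0 1)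
    (hne : ∀ i ∈ s, (x : ℂ) ≠ z i) :
    Tendsto (fun n => (cutoff s z N n).eval x) atTop (𝓝 0) := by
  have hfactor i (hi : i ∈ s) :
      Tendsto (fun n => (1 - (1 - 1 / 4 * ‖x - z i‖ ^ 2) ^ n) ^ N) atTop (𝓝 ((1 - 0) ^ N)) := by
    have hpos : 0 < ‖x - z i‖ := norm_pos_iff.2 (sub_ne_zero.2 (hne i hi))
    have hbase := one_sub_quarter_mul_sq_mem_Icc (hz i hi) hx
    exact ((tendsto_pow_atTop_nhds_zero_of_lt_one hbase.1
      (sub_lt_self 1 (by positivity))).const_sub 1).pow N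
  simpa only [eval_cutoff, sub_zero, one_pow, Finset.prod_const_one, sub_self] using
    (tendsto_finsetProd s hfactor).const_sub 1

end CutoffPolynomials

section CarlemanCutoff

lemma exp_neg_mem_Icc {x : ℝ} (hx : 0 < x) : Real.exp (-x) ∈ Set.Icc 0 1 :=
  ⟨(Real.exp_pos _).le, Real.exp_le_one_iff.2 (neg_nonpos.2 hx.le)⟩

lemma norm_laplace_aeval_shift_map_sq (q : ℝ[X]) (f : HalfLineL2) :
    (fun x => ‖laplace (aeval shift (q.map ofRealHom) f) x‖ ^ 2) =ᵐ[halfLineMeasure]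
      fun x => q.eval (Real.exp (-x)) ^ 2 * ‖laplace f x‖ ^ 2 := by
  filter_upwards [ae_pos_halfLineMeasure] with x hx
  have heval : (q.map ofRealHom).eval (Complex.exp (-x)) = q.eval (Real.exp (-x)) := by
    rw [← ofReal_neg, ← ofReal_exp, eval_map]
    exact eval₂_at_apply ofRealHom _
  rw [laplace_aeval_shift _ _ hx, heval, norm_mul, norm_real, mul_pow, Real.norm_eq_abs, sq_abs]

lemma hankelForm_inv_aeval_shift (q : ℝ[X]) (f : HalfLineL2) :
    hankelForm (fun u => (u : ℂ)⁻¹) (aeval shift (q.map ofRealHom) f) =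
      ∫ x, q.eval (Real.exp (-x)) ^ 2 * ‖laplace f x‖ ^ 2 ∂halfLineMeasure := by
  rw [hankelForm_inv, integral_congr_ae (norm_laplace_aeval_shift_map_sq q f)]

lemma integrable_eval_sq_mul_norm_laplace_sq (q : ℝ[X]) (f : HalfLineL2) :
    Integrable (fun x => q.eval (Real.exp (-x)) ^ 2 * ‖laplace f x‖ ^ 2) halfLineMeasure :=
  (integrable_norm_laplace_sq _).congr (norm_laplace_aeval_shift_map_sq q f)

variable {q : ℕ → ℝ[X]}

lemma antitone_hankelForm_inv_aeval_shift (hq : ∀ n, ∀ y ∈ Set.Icc 0 1, 0 ≤ (q n).eval y)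
    (hanti : ∀ y ∈ Set.Icc 0 1, Antitone fun n => (q n).eval y) (f : HalfLineL2) :
    Antitone fun n =>
      hankelForm (fun u => (u : ℂ)⁻¹) (aeval shift ((q n).map ofRealHom) f) := by
  intro m n hmn
  simp only [hankelForm_inv_aeval_shift]
  refine integral_mono_ae (integrable_eval_sq_mul_norm_laplace_sq _ f)
    (integrable_eval_sq_mul_norm_laplace_sq _ f) ?_
  filter_upwards [ae_pos_halfLineMeasure] with x hx
  have hy := exp_neg_mem_Icc hx
  exact mul_le_mul_of_nonneg_right (pow_le_pow_left₀ (hq n _ hy) (hanti _ hy hmn) 2)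
    (sq_nonneg _)

lemma tendsto_hankelForm_inv_aeval_shift (hq : ∀ n, ∀ y ∈ Set.Icc 0 1, (q n).eval y ∈ Set.Icc 0 1)
    (hlim : ∀ᵐ x ∂halfLineMeasure, Tendsto (fun n => (q n).eval (Real.exp (-x))) atTop (𝓝 0))
    (f : HalfLineL2) :
    Tendsto (fun n => hankelForm (fun u => (u : ℂ)⁻¹) (aeval shift ((q n).map ofRealHom) f))
      atTop (𝓝 0) := by
  simp only [hankelForm_inv_aeval_shift]
  rw [← integral_zero ℝ ℝ]
  refine tendsto_integral_of_dominated_convergence (fun x => ‖laplace f x‖ ^ 2)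
    (fun n => (integrable_eval_sq_mul_norm_laplace_sq (q n) f).1)
    (integrable_norm_laplace_sq f) (fun n => ?_) ?_
  · filter_upwards [ae_pos_halfLineMeasure] with x hx
    have hy := hq n _ (exp_neg_mem_Icc hx)
    rw [Real.norm_of_nonneg (by positivity)]
    exact mul_le_of_le_one_left (sq_nonneg _) (pow_le_one₀ hy.1 hy.2)
  · filter_upwards [hlim] with x hx
    simpa only [ne_eq, OfNat.ofNat_ne_zero, not_false_eq_true, zero_pow, zero_mul] using
      (hx.pow 2).mul_const (‖laplace f x‖ ^ 2)

lemma ae_forall_mem_exp_neg_ne {ι : Type*} (s : Finset ι) (z : ι → ℂ) :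
    ∀ᵐ x ∂halfLineMeasure, ∀ i ∈ s, (Real.exp (-x) : ℂ) ≠ z i := by
  refine ae_restrict_of_ae ((Finset.eventually_all s).2 fun i _ => ae_iff.2 ?_)
  refine Set.Subsingleton.measure_zero (fun x hx y hy => ?_) _
  rw [Set.mem_ofPred_eq, not_not] at hx hy
  exact neg_injective (Real.exp_injective (ofReal_injective (hx.trans hy.symm)))

end CarlemanCutoff

variable {M : ℕ} {α : ℕ → ℂ}

lemma exists_hankelForm_frKernel_eq_and_tendsto_hankelForm_inv
    (hα : ∀ m ∈ Finset.Icc 1 M, 0 < (α m).re) (P : ℕ → ℂ[X]) :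
    ∃ T : ℕ → Module.End ℂ HalfLineL2,
      (∀ n f, hankelForm (frKernel M α P) (T n f) = hankelForm (frKernel M α P) f) ∧
      ∀ f, Antitone (fun n => hankelForm (fun u => (u : ℂ)⁻¹) (T n f)) ∧
        Tendsto (fun n => hankelForm (fun u => (u : ℂ)⁻¹) (T n f)) atTop (𝓝 0) := by
  obtain ⟨N, hP⟩ : ∃ N : ℕ, ∀ m ∈ Finset.Icc 1 M, (P m).degree < N :=
    ⟨(Finset.Icc 1 M).sup (fun m => (P m).natDegree) + 1, fun m hm =>
      degree_le_natDegree.trans_lt (Nat.cast_lt.2 (Nat.lt_succ_of_le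
        (Finset.le_sup (f := fun m => (P m).natDegree) hm)))⟩
  have hz m (hm : m ∈ Finset.Icc 1 M) : ‖Complex.exp (-α m)‖ ≤ 1 := by
    rw [norm_exp, Real.exp_le_one_iff, neg_re]
    exact neg_nonpos.2 (hα m hm).le
  let q := cutoff (Finset.Icc 1 M) (fun m => Complex.exp (-α m)) N
  have hmem n y (hy : y ∈ Set.Icc (0 : ℝ) 1) : (q n).eval y ∈ Set.Icc 0 1 :=
    eval_cutoff_mem_Icc hz N n hy
  have hdvd n m (hm : m ∈ Finset.Icc 1 M) :
      (X - C (Complex.exp (-α m))) ^ N ∣ 1 - (q n).map ofRealHom :=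
    X_sub_C_pow_dvd_one_sub_cutoff (z := fun m => Complex.exp (-α m)) hm N n
  have hlim : ∀ᵐ x ∂halfLineMeasure, Tendsto (fun n => (q n).eval (Real.exp (-x))) atTop (𝓝 0) := by
    filter_upwards [ae_pos_halfLineMeasure, ae_forall_mem_exp_neg_ne (Finset.Icc 1 M) _]
      with x hx hne using tendsto_eval_cutoff hz N (exp_neg_mem_Icc hx) hne
  refine ⟨fun n => aeval shift ((q n).map ofRealHom), fun n f => ?_, fun f => ⟨?_, ?_⟩⟩
  · exact hankelForm_frKernel_aeval_shift hα hP (hdvd n) f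
  · exact antitone_hankelForm_inv_aeval_shift (fun n y hy => (hmem n y hy).1)
      (fun y hy => antitone_eval_cutoff hz N hy) f
  · exact tendsto_hankelForm_inv_aeval_shift hmem hlim f

theorem carleman_plus_finite_rank_negative_spectrum_general
    (hα : ∀ m ∈ Finset.Icc 1 M, 0 < (α m).re) (P : ℕ → ℂ[X]) :
    Nneg (hankelForm fun u => (u : ℂ)⁻¹ + frKernel M α P u) = Nneg (hankelForm (frKernel M α P)) ∧
    ((∀ f : HalfLineL2, 0 ≤ hankelForm (fun u => (u : ℂ)⁻¹ + frKernel M α P u) f) ↔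
      ∀ f : HalfLineL2, 0 ≤ hankelForm (frKernel M α P) f) := by
  obtain ⟨T, hT, hcarleman⟩ := exists_hankelForm_frKernel_eq_and_tendsto_hankelForm_inv hα P
  have hfr := isCarlemanBounded_frKernel hα P
  have hsum (f : HalfLineL2) : hankelForm (fun u => (u : ℂ)⁻¹ + frKernel M α P u) f =
      hankelForm (fun u => (u : ℂ)⁻¹) f + hankelForm (frKernel M α P) f := by
    simp only [hankelForm_eq_re_hankelPairing,
      hankelPairing_add_kernel isCarlemanBounded_inv hfr, add_re]
  have hle (f : HalfLineL2) : hankelForm (frKernel M α P) f ≤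
      hankelForm (fun u => (u : ℂ)⁻¹ + frKernel M α P u) f := by
    rw [hsum, hankelForm_inv]
    exact le_add_of_nonneg_left (integral_nonneg fun x => sq_nonneg _)
  have hanti (f : HalfLineL2) :
      Antitone fun n => hankelForm (fun u => (u : ℂ)⁻¹ + frKernel M α P u) (T n f) := by
    simpa only [hsum, hT] using (hcarleman f).1.add_const _
  have hlim (f : HalfLineL2) :
      Tendsto (fun n => hankelForm (fun u => (u : ℂ)⁻¹ + frKernel M α P u) (T n f)) atTop
        (𝓝 (hankelForm (frKernel M α P) f)) := by
    simpa only [hsum, hT, zero_add] using (hcarleman f).2.add_const _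
  refine ⟨?_, fun h f => ge_of_tendsto' (hlim f) fun n => h (T n f),
    fun h f => (h f).trans (hle f)⟩
  rw [← coe_reQuadraticForm_hankelSesq (isCarlemanBounded_inv.add hfr),
    ← coe_reQuadraticForm_hankelSesq hfr]
  exact Nneg_eq_of_antitone_of_tendsto hle hanti hlim

/-- **Perturbation of the Carleman operator by a finite rank Hankel operator**
(Theorem 1.3 of Yafaev, "On finite rank Hankel operators"): for the quadratic form
`Q_C(f) = ∫₀^∞∫₀^∞ ((t+s)⁻¹ + h(t+s)) f(s) conj(f(t)) ds dt` one has
`N₋(Q_C) = N₋(Q_h)`; in particular `Q_C ≥ 0` iff `Q_h ≥ 0`. -/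
theorem carleman_plus_finite_rank_negative_spectrum (M₀ M₁ : ℕ) (hM : 1 ≤ M₀ + 2 * M₁)
    (α : ℕ → ℂ) (P : ℕ → Polynomial ℂ) (K : ℕ → ℕ)
    (hdist : ∀ m ∈ Finset.Icc 1 (M₀ + 2 * M₁), ∀ n ∈ Finset.Icc 1 (M₀ + 2 * M₁),
      m ≠ n → α m ≠ α n)
    (hre : ∀ m ∈ Finset.Icc 1 (M₀ + 2 * M₁), 0 < (α m).re)
    (hαreal : ∀ m ∈ Finset.Icc 1 M₀, (α m).im = 0)
    (hαim : ∀ m ∈ Finset.Icc (M₀ + 1) (M₀ + M₁), 0 < (α m).im)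
    (hαconj : ∀ m ∈ Finset.Icc (M₀ + 1) (M₀ + M₁), α (M₁ + m) = starRingEnd ℂ (α m))
    (hdeg : ∀ m ∈ Finset.Icc 1 (M₀ + 2 * M₁), (P m).degree = (K m : WithBot ℕ))
    (hPreal : ∀ m ∈ Finset.Icc 1 M₀, ∀ k : ℕ,
      starRingEnd ℂ ((P m).coeff k) = (P m).coeff k)
    (hPconj : ∀ m ∈ Finset.Icc (M₀ + 1) (M₀ + M₁), ∀ k : ℕ,
      (P (M₁ + m)).coeff k = starRingEnd ℂ ((P m).coeff k)) :
    Nneg (hankelForm (fun u : ℝ => ((u : ℂ))⁻¹ + frKernel (M₀ + 2 * M₁) α P u)) =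
      Nneg (hankelForm (frKernel (M₀ + 2 * M₁) α P)) ∧
    ((∀ f : Lp ℂ 2 halfLineMeasure,
        0 ≤ hankelForm (fun u : ℝ => ((u : ℂ))⁻¹ + frKernel (M₀ + 2 * M₁) α P u) f) ↔
      (∀ f : Lp ℂ 2 halfLineMeasure, 0 ≤ hankelForm (frKernel (M₀ + 2 * M₁) α P) f)) :=
  carleman_plus_finite_rank_negative_spectrum_general hre P

end
end

section
/- N_+(S) and N_-(S), the numbers of strictly positive and strictly negative eigenvalues of S counted with multiplicity, are given by: if K is odd, N_+(S) = N_-(S) = (K+1)/2; if K is even and p_K > 0, N_+(S) = K/2 + 1 and N_-(S) = K/2; if K is even and p_K < 0, N_+(S) = K/2 and N_-(S) = K/2 + 1. -/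
/-!
The eigenvalue signs of a real symmetric matrix give the signature of its quadratic form. For a
symmetric matrix of order `n` that vanishes below the skew diagonal and has no zero on it, the form
is nondegenerate and vanishes on the span of the last `⌊n / 2⌋` coordinate vectors, so neither
index of inertia exceeds `⌈n / 2⌉`. This settles even `n`. For odd `n` the form is `c * x_m ^ 2` on
the span of the last `⌈n / 2⌉` coordinate vectors, where `c` is the central entry of the matrix and
`m` its position, so the sign of `c` decides which index is the larger. The central entry of the
sign-matrix is a positive multiple of `p_K`.
-/

open Matrix Polynomial

/-- The integer coefficients `ν ℓ k` defined by
`∏_{j=1}^{k} (j − z) = Σ_{ℓ=0}^{k} ν ℓ k · z^ℓ` (empty product `1`, `ν 0 0 = 1`),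
realized here over `ℝ`. -/
noncomputable def nuCoeffR (ℓ k : ℕ) : ℝ :=
  (∏ j ∈ Finset.Icc 1 k, (Polynomial.C (j : ℝ) - Polynomial.X)).coeff ℓ

/-- The coefficients `q_k = Σ_{ℓ=k}^{K} ν_{k,ℓ} α^{−1−ℓ} p_ℓ` of the sign-function of the
kernel `P(t)e^{−αt}`, `P(z) = Σ_{k=0}^{K} p_k z^k`, `α > 0`. -/
noncomputable def qCoeff (K : ℕ) (α : ℝ) (p : ℕ → ℝ) (k : ℕ) : ℝ :=
  ∑ ℓ ∈ Finset.Icc k K, nuCoeffR k ℓ * α ^ (-1 - (ℓ : ℤ)) * p ℓ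

/-- The sign-matrix `S` of the kernel `P(t)e^{−αt}`: the real symmetric matrix of order
`K+1` with `S j ℓ = (−1)^{j+ℓ} C(j+ℓ, j) q_{j+ℓ}` for `j + ℓ ≤ K` and `S j ℓ = 0`
for `j + ℓ > K`. -/
noncomputable def signMatrix (K : ℕ) (α : ℝ) (p : ℕ → ℝ) :
    Matrix (Fin (K + 1)) (Fin (K + 1)) ℝ := fun j ℓ =>
  if (j : ℕ) + (ℓ : ℕ) ≤ K then
    (-1) ^ ((j : ℕ) + (ℓ : ℕ)) * (Nat.choose ((j : ℕ) + (ℓ : ℕ)) (j : ℕ)) *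
      qCoeff K α p ((j : ℕ) + (ℓ : ℕ))
  else 0

open QuadraticMap QuadraticForm

section QuadraticFormOfMatrix

variable {R m n : Type*} [CommRing R] [Fintype m] [DecidableEq m] [Fintype n] [DecidableEq n]

lemma toQuadraticForm'_apply_eq_sum (A : Matrix n n R) (x : n → R) :
    A.toQuadraticForm' x = ∑ i, ∑ j, x i * A i j * x j := by
  simp only [Matrix.toQuadraticForm', LinearMap.BilinMap.toQuadraticMap_apply,
    Matrix.toLinearMap₂'_apply, smul_eq_mul]
  exact Finset.sum_congr rfl fun i _ => Finset.sum_congr rfl fun j _ => by ring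

lemma toQuadraticForm'_neg (A : Matrix n n R) :
    (-A).toQuadraticForm' = -A.toQuadraticForm' := by
  ext x
  simp [toQuadraticForm'_apply_eq_sum]

lemma toQuadraticForm'_diagonal (w : n → R) :
    (diagonal w).toQuadraticForm' = weightedSumSquares R w := by
  ext x
  simp only [toQuadraticForm'_apply_eq_sum, weightedSumSquares_apply, smul_eq_mul]
  refine Finset.sum_congr rfl fun i _ => ?_
  rw [Fintype.sum_eq_single i fun j hj => by simp [diagonal_apply_ne' w hj], diagonal_apply_eq]
  ring

lemma toQuadraticForm'_transpose_mul_mul (A : Matrix m m R) (P : Matrix m n R) :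
    (Pᵀ * A * P).toQuadraticForm' = A.toQuadraticForm'.comp (Matrix.toLin' P) := by
  ext x
  simp only [Matrix.toQuadraticForm', LinearMap.BilinMap.toQuadraticMap_apply,
    QuadraticMap.comp_apply, ← Matrix.toLinearMap₂'_comp, LinearMap.compl₁₂_apply]

lemma equivalent_transpose_mul_mul (A : Matrix n n R) {P P' : Matrix n n R} (hP : P * P' = 1) :
    A.toQuadraticForm'.Equivalent (Pᵀ * A * P).toQuadraticForm' := by
  rw [toQuadraticForm'_transpose_mul_mul]
  exact ⟨A.toQuadraticForm'.isometryEquivOfCompLinearEquiv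
    (Matrix.toLin'OfInv (mul_eq_one_comm.mp hP) hP)⟩

lemma radical_toQuadraticForm'_eq_bot [IsDomain R] [Invertible (2 : R)] {A : Matrix n n R}
    (hA : A.IsSymm) (hdet : A.det ≠ 0) : A.toQuadraticForm'.radical = ⊥ := by
  have hassoc : associated A.toQuadraticForm' = Matrix.toLinearMap₂' R A :=
    associated_left_inverse R (Matrix.isSymm_toBilin'_iff_isSymm.mpr hA).eq
  rw [radical_eq_ker_associated, hassoc, ← LinearMap.separatingLeft_iff_ker_eq_bot]
  exact (LinearMap.nondegenerate_toLinearMap₂'_of_det_ne_zero' hdet).1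

end QuadraticFormOfMatrix

section Signature

variable {n : Type*} [Fintype n] [DecidableEq n]

lemma sigPos_add_sigNeg_of_det_ne_zero {𝕜 : Type*} [Field 𝕜] [LinearOrder 𝕜]
    [IsStrictOrderedRing 𝕜] {A : Matrix n n 𝕜} (hA : A.IsSymm) (hdet : A.det ≠ 0) :
    sigPos A.toQuadraticForm' + sigNeg A.toQuadraticForm' = Fintype.card n := by
  have : Invertible (2 : 𝕜) := invertibleOfNonzero two_ne_zero
  rw [← Module.finrank_fintype_fun_eq_card 𝕜, ← sigPos_add_sigNeg_add_radical,
    radical_toQuadraticForm'_eq_bot hA hdet, finrank_bot, add_zero]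

variable {A : Matrix n n ℝ} (hA : A.IsHermitian)

lemma equivalent_weightedSumSquares_eigenvalues :
    A.toQuadraticForm'.Equivalent (weightedSumSquares ℝ hA.eigenvalues) := by
  have hdiag := hA.conjStarAlgAut_star_eigenvectorUnitary
  rw [Unitary.conjStarAlgAut_star_apply, star_eq_conjTranspose,
    conjTranspose_eq_transpose_of_trivial] at hdiag
  rw [← toQuadraticForm'_diagonal]
  exact hdiag ▸ equivalent_transpose_mul_mul A (Unitary.coe_mul_star_self hA.eigenvectorUnitary)

lemma card_pos_eigenvalues_eq_sigPos :
    (Finset.univ.filter fun i => 0 < hA.eigenvalues i).card = sigPos A.toQuadraticForm' := by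
  rw [sigPos_of_equiv_weightedSumSquares (equivalent_weightedSumSquares_eigenvalues hA),
    ← Set.ncard_coe_finset, Finset.coe_filter_univ]

lemma card_neg_eigenvalues_eq_sigNeg :
    (Finset.univ.filter fun i => hA.eigenvalues i < 0).card = sigNeg A.toQuadraticForm' := by
  rw [sigNeg_of_equiv_weightedSumSquares (equivalent_weightedSumSquares_eigenvalues hA),
    ← Set.ncard_coe_finset, Finset.coe_filter_univ]

end Signature

lemma ncard_rev_lt_self (n : ℕ) : {i : Fin n | i.rev < i}.ncard = n / 2 := by
  have hcompl : (Finset.univ.filter fun i : Fin n => i.rev < i) =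
      (Finset.univ.filter fun i : Fin n => (i : ℕ) < (n + 1) / 2)ᶜ := by
    ext i
    simp only [Finset.mem_filter_univ, Finset.mem_compl, Fin.lt_def, Fin.val_rev]
    omega
  rw [← Finset.coe_filter_univ, Set.ncard_coe_finset, hcompl, Finset.card_compl,
    Fin.card_filter_val_lt, Fintype.card_fin]
  omega

/-- A square matrix is *skew triangular* if all its entries strictly below the skew diagonal
vanish, as they do for the sign-matrix. The skew-diagonal entries are `A i i.rev`. -/
def IsSkewTriangular {R : Type*} [Zero R] {n : ℕ} (A : Matrix (Fin n) (Fin n) R) : Prop :=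
  ∀ ⦃i j⦄, j.rev < i → A i j = 0

namespace IsSkewTriangular

variable {n : ℕ}

section CommRing

variable {R : Type*} [CommRing R] {A : Matrix (Fin n) (Fin n) R}

lemma neg (hA : IsSkewTriangular A) : IsSkewTriangular (-A) := fun i j hij => by
  rw [Matrix.neg_apply, hA hij, neg_zero]

lemma det_eq (hA : IsSkewTriangular A) :
    A.det = Equiv.Perm.sign (Fin.revPerm : Equiv.Perm (Fin n)) * ∏ i, A i i.rev := by
  have htri : (A.submatrix id Fin.revPerm).IsUpperTriangular := fun i j hij =>
    hA (by simpa using hij)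
  have hdet : Equiv.Perm.sign (Fin.revPerm : Equiv.Perm (Fin n)) * A.det = ∏ i, A i i.rev := by
    rw [← Matrix.det_permute', det_of_isUpperTriangular htri]
    rfl
  rw [← hdet, ← mul_assoc, ← Int.cast_mul, Int.units_coe_mul_self, Int.cast_one, one_mul]

lemma det_ne_zero [IsDomain R] (hA : IsSkewTriangular A) (hdiag : ∀ i, A i i.rev ≠ 0) :
    A.det ≠ 0 := by
  rw [hA.det_eq]
  exact mul_ne_zero ((Equiv.Perm.sign _).isUnit.map (Int.castRingHom R)).ne_zero
    (Finset.prod_ne_zero_iff.mpr fun i _ => hdiag i)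

lemma toQuadraticForm'_eq_zero_of_mem_spanSubset (hA : IsSkewTriangular A) {x : Fin n → R}
    (hx : x ∈ Pi.spanSubset R {i : Fin n | i.rev < i}) : A.toQuadraticForm' x = 0 := by
  rw [Pi.mem_spanSubset_iff] at hx
  rw [toQuadraticForm'_apply_eq_sum]
  refine Finset.sum_eq_zero fun i _ => Finset.sum_eq_zero fun j _ => ?_
  by_cases hi : i.rev < i
  · by_cases hj : j.rev < j
    · rw [hA (by grind), mul_zero, zero_mul]
    · rw [hx j hj, mul_zero]
  · rw [hx i hi, zero_mul, zero_mul]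

lemma toQuadraticForm'_eq_center_mul_sq (hA : IsSkewTriangular A) {c : Fin n} (hc : c.rev = c)
    {x : Fin n → R} (hx : x ∈ Pi.spanSubset R (Set.Ici c)) :
    A.toQuadraticForm' x = A c c * x c ^ 2 := by
  rw [Pi.mem_spanSubset_iff] at hx
  have hzero (i j : Fin n) (hij : i ≠ c ∨ j ≠ c) : x i * A i j * x j = 0 := by
    by_cases hi : c ≤ i
    · by_cases hj : c ≤ j
      · rw [hA (by grind), mul_zero, zero_mul]
      · rw [hx j hj, mul_zero]
    · rw [hx i hi, zero_mul, zero_mul]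
  rw [toQuadraticForm'_apply_eq_sum,
    Fintype.sum_eq_single c fun i hi => Finset.sum_eq_zero fun j _ => hzero i j (.inl hi),
    Fintype.sum_eq_single c fun j hj => hzero c j (.inr hj)]
  ring

end CommRing

section LinearOrderedField

variable {𝕜 : Type*} [Field 𝕜] [LinearOrder 𝕜] {A : Matrix (Fin n) (Fin n) 𝕜}

lemma sigPos_add_half_le (hA : IsSkewTriangular A) :
    sigPos A.toQuadraticForm' + n / 2 ≤ n := by
  simpa [Pi.dim_spanSubset, ncard_rev_lt_self] using
    sigPos_add_finrank_le_of_nonpos fun x hx =>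
      (hA.toQuadraticForm'_eq_zero_of_mem_spanSubset hx).le

lemma sigNeg_add_half_le (hA : IsSkewTriangular A) :
    sigNeg A.toQuadraticForm' + n / 2 ≤ n := by
  rw [← sigPos_neg, ← toQuadraticForm'_neg]
  exact hA.neg.sigPos_add_half_le

variable [IsStrictOrderedRing 𝕜]

lemma sigPos_le_of_center_neg (hA : IsSkewTriangular A) {c : Fin n} (hc : c.rev = c)
    (hneg : A c c < 0) : sigPos A.toQuadraticForm' ≤ c := by
  have hbound := sigPos_add_finrank_le_of_nonpos (Q := A.toQuadraticForm')
    (V := Pi.spanSubset 𝕜 (Set.Ici c)) fun x hx => by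
      rw [hA.toQuadraticForm'_eq_center_mul_sq hc hx]
      exact mul_nonpos_of_nonpos_of_nonneg hneg.le (sq_nonneg _)
  rw [Pi.dim_spanSubset, ← Finset.coe_Ici, Set.ncard_coe_finset, Fin.card_Ici,
    Module.finrank_fin_fun] at hbound
  omega

theorem sigPos_sigNeg_of_even (hA : IsSkewTriangular A) (hsymm : A.IsSymm)
    (hdiag : ∀ i, A i i.rev ≠ 0) (hn : Even n) :
    sigPos A.toQuadraticForm' = n / 2 ∧ sigNeg A.toQuadraticForm' = n / 2 := by
  have htotal := sigPos_add_sigNeg_of_det_ne_zero hsymm (hA.det_ne_zero hdiag)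
  rw [Fintype.card_fin] at htotal
  have hsigPos := hA.sigPos_add_half_le
  have hsigNeg := hA.sigNeg_add_half_le
  have hhalf := Nat.two_mul_div_two_of_even hn
  omega

theorem sigPos_sigNeg_of_center_neg (hA : IsSkewTriangular A) (hsymm : A.IsSymm)
    (hdiag : ∀ i, A i i.rev ≠ 0) {c : Fin n} (hc : c.rev = c) (hneg : A c c < 0) :
    sigPos A.toQuadraticForm' = c ∧ sigNeg A.toQuadraticForm' = c + 1 := by
  have htotal := sigPos_add_sigNeg_of_det_ne_zero hsymm (hA.det_ne_zero hdiag)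
  rw [Fintype.card_fin] at htotal
  have hsigPos := hA.sigPos_le_of_center_neg hc hneg
  have hsigNeg := hA.sigNeg_add_half_le
  have hcenter : n - (c + 1) = (c : ℕ) := by rw [← Fin.val_rev, hc]
  omega

theorem sigPos_sigNeg_of_center_pos (hA : IsSkewTriangular A) (hsymm : A.IsSymm)
    (hdiag : ∀ i, A i i.rev ≠ 0) {c : Fin n} (hc : c.rev = c) (hpos : 0 < A c c) :
    sigPos A.toQuadraticForm' = c + 1 ∧ sigNeg A.toQuadraticForm' = c := by
  have hindices := hA.neg.sigPos_sigNeg_of_center_neg hsymm.neg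
    (fun i => neg_ne_zero.mpr (hdiag i)) hc (neg_lt_zero.mpr hpos)
  rwa [toQuadraticForm'_neg, sigPos_neg, sigNeg_neg, and_comm] at hindices

end LinearOrderedField

end IsSkewTriangular

section SignMatrix

lemma nuCoeffR_self (k : ℕ) : nuCoeffR k k = (-1) ^ k := by
  have hdeg (j : ℕ) : (C (j : ℝ) - X).natDegree ≤ 1 := by compute_degree
  simpa [nuCoeffR] using
    coeff_prod_of_natDegree_le (s := Finset.Icc 1 k) (fun j : ℕ => C (j : ℝ) - X) 1
      fun j _ => hdeg j

variable (K : ℕ) (α : ℝ) (p : ℕ → ℝ)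

lemma qCoeff_self : qCoeff K α p K = (-1) ^ K * α ^ (-1 - (K : ℤ)) * p K := by
  rw [qCoeff, Finset.Icc_self, Finset.sum_singleton, nuCoeffR_self]

lemma isSkewTriangular_signMatrix : IsSkewTriangular (signMatrix K α p) := fun i j hij =>
  if_neg (by grind)

lemma signMatrix_apply_rev (i : Fin (K + 1)) :
    signMatrix K α p i i.rev = K.choose i * α ^ (-1 - (K : ℤ)) * p K := by
  have hsum : (i : ℕ) + i.rev = K := by grind
  have hsq : (-1 : ℝ) ^ K * (-1) ^ K = 1 := by rw [← mul_pow, neg_one_mul, neg_neg, one_pow]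
  rw [signMatrix, if_pos hsum.le, hsum, qCoeff_self]
  linear_combination K.choose i * α ^ (-1 - (K : ℤ)) * p K * hsq

lemma sign_signMatrix_apply_rev {α : ℝ} (hα : 0 < α) (i : Fin (K + 1)) :
    SignType.sign (signMatrix K α p i i.rev) = SignType.sign (p K) := by
  have hchoose : (0 : ℝ) < K.choose i := mod_cast Nat.choose_pos (Fin.is_le i)
  rw [signMatrix_apply_rev, sign_mul, sign_pos (mul_pos hchoose (zpow_pos hα _)), one_mul]

end SignMatrix

/-- **Inertia of the sign-matrix** of the kernel `P(t)e^{−αt}` (`α > 0`, `P` real with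
leading coefficient `p_K ≠ 0`): if `K` is odd, it has `(K+1)/2` positive and `(K+1)/2`
negative eigenvalues; if `K` is even and `p_K > 0` (resp. `p_K < 0`), it has `K/2+1`
positive and `K/2` negative (resp. `K/2` positive and `K/2+1` negative) eigenvalues,
counted with multiplicity. -/
theorem sign_matrix_inertia (K : ℕ) (α : ℝ) (hα : 0 < α) (p : ℕ → ℝ) (hpK : p K ≠ 0)
    (hS : (signMatrix K α p).IsHermitian) :
    (Odd K →
      (Finset.univ.filter fun i => 0 < hS.eigenvalues i).card = (K + 1) / 2 ∧
      (Finset.univ.filter fun i => hS.eigenvalues i < 0).card = (K + 1) / 2) ∧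
    (Even K → 0 < p K →
      (Finset.univ.filter fun i => 0 < hS.eigenvalues i).card = K / 2 + 1 ∧
      (Finset.univ.filter fun i => hS.eigenvalues i < 0).card = K / 2) ∧
    (Even K → p K < 0 →
      (Finset.univ.filter fun i => 0 < hS.eigenvalues i).card = K / 2 ∧
      (Finset.univ.filter fun i => hS.eigenvalues i < 0).card = K / 2 + 1) := by
  have htri := isSkewTriangular_signMatrix K α p
  have hsymm : (signMatrix K α p).IsSymm := by
    rwa [IsHermitian, conjTranspose_eq_transpose_of_trivial] at hS
  have hsign := sign_signMatrix_apply_rev K p hα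
  have hdiag (i : Fin (K + 1)) : signMatrix K α p i i.rev ≠ 0 := by
    rwa [← sign_ne_zero, hsign, sign_ne_zero]
  let c : Fin (K + 1) := ⟨K / 2, by omega⟩
  have hc (hK : Even K) : c.rev = c := by grind
  have hcenter (hK : Even K) : SignType.sign (signMatrix K α p c c) = SignType.sign (p K) := by
    simpa only [hc hK] using hsign c
  rw [card_pos_eigenvalues_eq_sigPos, card_neg_eigenvalues_eq_sigNeg]
  refine ⟨fun hK => ?_, fun hK hp => ?_, fun hK hp => ?_⟩
  · exact htri.sigPos_sigNeg_of_even hsymm hdiag hK.add_one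
  · refine htri.sigPos_sigNeg_of_center_pos hsymm hdiag (hc hK) (sign_eq_one_iff.mp ?_)
    rw [hcenter hK, sign_pos hp]
  · refine htri.sigPos_sigNeg_of_center_neg hsymm hdiag (hc hK) (sign_eq_neg_one_iff.mp ?_)
    rw [hcenter hK, sign_neg hp]
end
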